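/- arXiv:1801.08461 — 6 statements merged into one kernel-verified Lean document; each statement's English description precedes it below -/
import Mathlib

section
/- Let M ⊂ ℝ^d be a compact C² manifold, φ a flow on M with C¹ velocity field X, and Λ ⊂ M a compact φ-invariant subset. If the restricted flow φ|Λ is k*-expansive and efficient, then φ|Λ is rescaling expansive. -/
/-!
By k*-expansivity `φ_{h t₀} y` lies on the orbit of `x` for some `t₀`, close to `φ_{t₀} x` in time,
so `φ_{h t} y = φ_{g t} (φ_t x)` for all `t`, with a continuous time lag `g` satisfying
`|g t₀| ≤ r`. Since `X` is Lipschitz, for a uniform time every orbit moves away from its starting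
point at no less than half its initial speed. A lag `|g t| = r` would therefore give
`dist (φ_t x) (φ_{h t} y) ≥ r‖X (φ_t x)‖ / 2 > δ‖X (φ_t x)‖`. So `|g|` never takes the value `r`,
and by the intermediate value theorem it never exceeds `r`. This needs `X (φ_t x) ≠ 0`; an orbit
through a zero of `X` is a fixed point, at which the rescaled closeness is equality.
-/

open Metric Set Function

noncomputable section

/-- The set of increasing homeomorphisms of `ℝ`, viewed as continuous strictly
increasing surjections `ℝ → ℝ`. -/
def IsHplus (h : ℝ → ℝ) : Prop :=
  Continuous h ∧ StrictMono h ∧ Function.Surjective h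

/-- Increasing homeomorphisms of `ℝ` fixing `0`. -/
def IsHplus0 (h : ℝ → ℝ) : Prop := IsHplus h ∧ h 0 = 0

/-- The orbit `φ_ℝ(x)` of a point under a flow. -/
def orb {α : Type*} (φ : ℝ → α → α) (x : α) : Set α := Set.range fun t => φ t x

/-- The orbit segment `φ_{[a,b]}(x)` (where `[a,b]` is the closed interval between
`a` and `b`, also when `a > b`). -/
def arc {α : Type*} (φ : ℝ → α → α) (x : α) (a b : ℝ) : Set α :=
  (fun t => φ t x) '' Set.uIcc a b

abbrev Euc (d : ℕ) := EuclideanSpace ℝ (Fin d)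

/-- A flow on a subset `M` of a topological space: continuous on `ℝ × M`, maps `M`
to itself, `φ_0 = id` and `φ_{s+t} = φ_s ∘ φ_t` on `M`. -/
def FlowOn {α : Type*} [TopologicalSpace α] (φ : ℝ → α → α) (M : Set α) : Prop :=
  ContinuousOn (fun p : ℝ × α => φ p.1 p.2) (Set.univ ×ˢ M) ∧
  (∀ t : ℝ, Set.MapsTo (φ t) M M) ∧ (∀ x ∈ M, φ 0 x = x) ∧
  ∀ s t : ℝ, ∀ x ∈ M, φ (s + t) x = φ s (φ t x)

/-- The fixed points of the flow lying in `M`. -/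
def fixOn {α : Type*} (φ : ℝ → α → α) (M : Set α) : Set α :=
  {σ ∈ M | ∀ t : ℝ, φ t σ = σ}

/-- `φ|Λ` is k*-expansive: for all `ε > 0` there is `δ > 0` such that if `x, y ∈ Λ`,
`h ∈ H⁺₀(ℝ)` and `dist (φ_t x) (φ_{h t} y) ≤ δ` for all `t`, then
`φ_{h t₀} y ∈ φ_{[-ε,ε]} (φ_{t₀} x)` for some `t₀`. -/
def KStarExpansiveOn {α : Type*} [MetricSpace α] (φ : ℝ → α → α) (Λ : Set α) : Prop :=
  ∀ ε > (0 : ℝ), ∃ δ > (0 : ℝ), ∀ x ∈ Λ, ∀ y ∈ Λ, ∀ h : ℝ → ℝ, IsHplus0 h →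
    (∀ t : ℝ, dist (φ t x) (φ (h t) y) ≤ δ) →
    ∃ t₀ : ℝ, φ (h t₀) y ∈ arc φ (φ t₀ x) (-ε) ε

/-- `φ|Λ` is rescaling expansive (with velocity field `X`): for all `ε > 0` there is
`δ > 0` such that if `x, y ∈ Λ`, `h ∈ H⁺₀(ℝ)` and
`dist (φ_t x) (φ_{h t} y) ≤ δ‖X (φ_t x)‖` for all `t`, then
`φ_{h t} y ∈ φ_{[-ε,ε]} (φ_t x)` for all `t`. -/
def RescalingExpansive {d : ℕ} (φ : ℝ → Euc d → Euc d) (X : Euc d → Euc d)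
    (Λ : Set (Euc d)) : Prop :=
  ∀ ε > (0 : ℝ), ∃ δ > (0 : ℝ), ∀ x ∈ Λ, ∀ y ∈ Λ, ∀ h : ℝ → ℝ, IsHplus0 h →
    (∀ t : ℝ, dist (φ t x) (φ (h t) y) ≤ δ * ‖X (φ t x)‖) →
    ∀ t : ℝ, φ (h t) y ∈ arc φ (φ t x) (-ε) ε

/-- `φ|Λ` is efficient: there is `δ* > 0` such that whenever `0 < δ < δ*`,
`x ∈ Λ \ fix(φ)`, `g ∈ H⁺(ℝ)`, `dist (φ_t x) (φ_{g t} x) < δ‖X (φ_t x)‖` for all `t`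
and `diam (φ_{[t, g t]} x) < δ*` for all `t`, then
`φ_{[t, g t]} x ⊆ B(φ_t x, δ‖X (φ_t x)‖)` for all `t`. -/
def Efficient {d : ℕ} (φ : ℝ → Euc d → Euc d) (X : Euc d → Euc d)
    (Λ : Set (Euc d)) : Prop :=
  ∃ δs > (0 : ℝ), ∀ δ : ℝ, 0 < δ → δ < δs → ∀ x ∈ Λ, (¬ ∀ t : ℝ, φ t x = x) →
    ∀ g : ℝ → ℝ, IsHplus g →
    (∀ t : ℝ, dist (φ t x) (φ (g t) x) < δ * ‖X (φ t x)‖) →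
    (∀ t : ℝ, Metric.diam (arc φ x t (g t)) < δs) →
    ∀ t : ℝ, arc φ x t (g t) ⊆ Metric.ball (φ t x) (δ * ‖X (φ t x)‖)

section IntegralCurves

variable {E : Type*} [NormedAddCommGroup E] [NormedSpace ℝ E]
  {X : E → E} {M : Set E} {K : NNReal} {γ : ℝ → E} {a b : ℝ}

theorem norm_velocity_sub_le_half (hX : LipschitzOnWith K X M)
    (hγ : IsIntegralCurveOn γ (fun _ => X) (uIcc a b)) (hγM : MapsTo γ (uIcc a b) M)
    (hK : K * |b - a| ≤ 1 / 3) {t : ℝ} (ht : t ∈ uIcc a b) :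
    ‖X (γ t) - X (γ a)‖ ≤ ‖X (γ a)‖ / 2 := by
  have hcont : ContinuousOn (fun u => ‖X (γ u)‖) (uIcc a b) :=
    (hX.continuousOn.comp (fun u hu => (hγ u hu).continuousWithinAt) hγM).norm
  obtain ⟨v, hv, hmax⟩ := isCompact_uIcc.exists_isMaxOn nonempty_uIcc hcont
  have hdev : ∀ u ∈ uIcc a b, ‖X (γ u) - X (γ a)‖ ≤ ‖X (γ v)‖ / 3 := fun u hu => calc
    ‖X (γ u) - X (γ a)‖ ≤ K * ‖γ u - γ a‖ := hX.norm_sub_le (hγM hu) (hγM left_mem_uIcc)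
    _ ≤ K * (‖X (γ v)‖ * |u - a|) := by
      gcongr
      exact (convex_uIcc a b).norm_image_sub_le_of_norm_hasDerivWithin_le hγ
        (fun _ hw => hmax hw) left_mem_uIcc hu
    _ ≤ K * (‖X (γ v)‖ * |b - a|) := by
      gcongr ?_ * (?_ * ?_)
      exact abs_sub_left_of_mem_uIcc hu
    _ = K * |b - a| * ‖X (γ v)‖ := by ring
    _ ≤ 1 / 3 * ‖X (γ v)‖ := by gcongr
    _ = ‖X (γ v)‖ / 3 := by ring
  have hmax_le : ‖X (γ v)‖ ≤ ‖X (γ a)‖ + ‖X (γ v)‖ / 3 :=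
    (norm_le_norm_add_norm_sub' _ _).trans (by gcongr; exact hdev v hv)
  linarith [hdev t ht]

theorem abs_sub_mul_norm_velocity_le_two_mul_dist (hX : LipschitzOnWith K X M)
    (hγ : IsIntegralCurveOn γ (fun _ => X) (uIcc a b)) (hγM : MapsTo γ (uIcc a b) M)
    (hK : K * |b - a| ≤ 1 / 3) :
    |b - a| * ‖X (γ a)‖ ≤ 2 * dist (γ a) (γ b) := by
  have hdev : ‖(γ b - b • X (γ a)) - (γ a - a • X (γ a))‖ ≤ ‖X (γ a)‖ / 2 * |b - a| :=
    (convex_uIcc a b).norm_image_sub_le_of_norm_hasDerivWithin_le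
      (f := fun t => γ t - t • X (γ a))
      (fun t ht => by
        simpa only [one_smul] using
          (hγ t ht).fun_sub ((hasDerivAt_id' t).hasDerivWithinAt.smul_const (X (γ a))))
      (fun t ht => norm_velocity_sub_le_half hX hγ hγM hK ht) left_mem_uIcc right_mem_uIcc
  have htri : |b - a| * ‖X (γ a)‖ ≤ dist (γ a) (γ b) + ‖X (γ a)‖ / 2 * |b - a| := calc
    |b - a| * ‖X (γ a)‖ = ‖(b - a) • X (γ a)‖ := by rw [norm_smul, Real.norm_eq_abs]
    _ = ‖(γ b - γ a) - ((γ b - b • X (γ a)) - (γ a - a • X (γ a)))‖ := by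
      congr 1
      module
    _ ≤ ‖γ b - γ a‖ + ‖(γ b - b • X (γ a)) - (γ a - a • X (γ a))‖ := norm_sub_le _ _
    _ ≤ dist (γ a) (γ b) + ‖X (γ a)‖ / 2 * |b - a| := by
      rw [dist_eq_norm']
      gcongr
  linarith

theorem eq_of_velocity_eq_zero (hX : LipschitzOnWith K X M)
    (hγ : IsIntegralCurve γ fun _ => X) (hγM : ∀ t, γ t ∈ M) {t₀ : ℝ} (h₀ : X (γ t₀) = 0)
    (t : ℝ) : γ t = γ t₀ :=
  congrFun (ODE_solution_unique_univ (v := fun _ => X) (s := fun _ => M) (fun _ => hX)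
    (fun s => ⟨hγ s, hγM s⟩)
    (fun s => ⟨by simpa only [h₀] using hasDerivAt_const s (γ t₀), hγM t₀⟩) rfl) t

end IntegralCurves

theorem mem_arc_neg_self {α : Type*} {φ : ℝ → α → α} {x z : α} {r : ℝ} (hr : 0 ≤ r) :
    z ∈ arc φ x (-r) r ↔ ∃ s, |s| ≤ r ∧ φ s x = z := by
  simp only [arc, uIcc_of_le (neg_le_self hr), mem_image, mem_Icc, abs_le]

theorem FlowOn.apply_add_eq_apply_add {α : Type*} [TopologicalSpace α] {φ : ℝ → α → α} {M : Set α}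
    (hflow : FlowOn φ M) {x y : α} (hx : x ∈ M) (hy : y ∈ M) {a b : ℝ}
    (h : φ a x = φ b y) (c : ℝ) : φ (c + a) x = φ (c + b) y := by
  rw [hflow.2.2.2 c a x hx, hflow.2.2.2 c b y hy, h]

section RescalingExpansive

variable {E : Type*} [NormedAddCommGroup E]

/-- Rescaling expansivity of `φ` on `Λ` with velocity field `X`: the notion of
`RescalingExpansive`, with an arbitrary normed space in place of `ℝ^d`. -/
def RescalingExpansiveOn (φ : ℝ → E → E) (X : E → E) (Λ : Set E) : Prop :=
  ∀ ε > (0 : ℝ), ∃ δ > (0 : ℝ), ∀ x ∈ Λ, ∀ y ∈ Λ, ∀ h : ℝ → ℝ, IsHplus0 h →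
    (∀ t : ℝ, dist (φ t x) (φ (h t) y) ≤ δ * ‖X (φ t x)‖) →
    ∀ t : ℝ, φ (h t) y ∈ arc φ (φ t x) (-ε) ε

variable [NormedSpace ℝ E] {φ : ℝ → E → E} {X : E → E} {M Λ : Set E} {K : NNReal}
  {x y : E} {h : ℝ → ℝ} {r δ t₀ : ℝ}

theorem FlowOn.abs_mul_norm_velocity_le_two_mul_dist (hflow : FlowOn φ M)
    (hX : LipschitzOnWith K X M) (hvel : ∀ x ∈ M, IsIntegralCurve (φ · x) fun _ => X)
    (hx : x ∈ M) {s : ℝ} (hs : K * |s| ≤ 1 / 3) :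
    |s| * ‖X x‖ ≤ 2 * dist x (φ s x) := by
  simpa only [sub_zero, hflow.2.2.1 x hx] using
    abs_sub_mul_norm_velocity_le_two_mul_dist (a := 0) (b := s) hX
      ((hvel x hx).isIntegralCurveOn _) (fun t _ => hflow.2.1 t hx) (by rwa [sub_zero])

theorem FlowOn.mem_arc_of_velocity_ne_zero (hflow : FlowOn φ M) (hX : LipschitzOnWith K X M)
    (hvel : ∀ x ∈ M, IsIntegralCurve (φ · x) fun _ => X) (hx : x ∈ M) (hy : y ∈ M)
    (hh : Continuous h) (hr : 0 ≤ r) (hKr : K * r ≤ 1 / 3) (hδr : 2 * δ < r)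
    (hclose : ∀ t, dist (φ t x) (φ (h t) y) ≤ δ * ‖X (φ t x)‖)
    (hreg : ∀ t, X (φ t x) ≠ 0) (ht₀ : φ (h t₀) y ∈ arc φ (φ t₀ x) (-r) r) (t : ℝ) :
    φ (h t) y ∈ arc φ (φ t x) (-r) r := by
  obtain ⟨s, hs, hst⟩ := (mem_arc_neg_self hr).1 ht₀
  set lag : ℝ → ℝ := fun t => h t - h t₀ + (s + t₀) - t with hlag
  have hφlag : ∀ t, φ (lag t) (φ t x) = φ (h t) y := fun t => by
    rw [← hflow.2.2.2 s t₀ x hx] at hst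
    rw [← hflow.2.2.2 _ t x hx, hlag, sub_add_cancel, hflow.apply_add_eq_apply_add hx hy hst,
      sub_add_cancel]
  have hlag_ne : ∀ t, |lag t| ≠ r := fun t hlag_eq => by
    have hfast : r * ‖X (φ t x)‖ ≤ 2 * dist (φ t x) (φ (h t) y) := by
      simpa only [hφlag, hlag_eq] using
        hflow.abs_mul_norm_velocity_le_two_mul_dist hX hvel (hflow.2.1 t hx) (s := lag t)
          (by rwa [hlag_eq])
    have hslow : 2 * δ * ‖X (φ t x)‖ < r * ‖X (φ t x)‖ := by
      gcongr
      exact norm_pos_iff.2 (hreg t)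
    linarith [hclose t]
  refine (mem_arc_neg_self hr).2 ⟨lag t, ?_, hφlag t⟩
  by_contra! hlt
  have hlag₀ : |lag t₀| ≤ r := by simpa [hlag] using hs
  have hlag_cont : Continuous fun t => |lag t| := by fun_prop
  obtain ⟨u, hu⟩ := mem_range_of_exists_le_of_exists_ge hlag_cont ⟨t₀, hlag₀⟩ ⟨t, hlt.le⟩
  exact hlag_ne u hu

theorem FlowOn.eq_of_dist_le_of_velocity_eq_zero (hflow : FlowOn φ M) (hX : LipschitzOnWith K X M)
    (hvel : ∀ x ∈ M, IsIntegralCurve (φ · x) fun _ => X) (hx : x ∈ M) (h₀ : X (φ t₀ x) = 0)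
    {t : ℝ} (hclose : dist (φ t x) y ≤ δ * ‖X (φ t x)‖) : φ t x = y := by
  have hstat : φ t x = φ t₀ x :=
    eq_of_velocity_eq_zero hX (hvel x hx) (fun t => hflow.2.1 t hx) h₀ t
  rwa [hstat, h₀, norm_zero, mul_zero, dist_le_zero, ← hstat] at hclose

theorem kstar_and_efficient_imp_rescaling_general (hflow : FlowOn φ M)
    (hX : LipschitzOnWith K X M) (hXb : Bornology.IsBounded (X '' M))
    (hvel : ∀ x ∈ M, IsIntegralCurve (φ · x) fun _ => X) (hΛM : Λ ⊆ M)
    (hks : KStarExpansiveOn φ Λ) : RescalingExpansiveOn φ X Λ := by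
  intro ε hε
  obtain ⟨B, hB, hXB⟩ := hXb.exists_pos_norm_le
  obtain ⟨r, hr, hrε, hKr⟩ : ∃ r > 0, r ≤ ε ∧ K * r ≤ 1 / 3 := by
    obtain ⟨r, hr, hKr⟩ := exists_pos_mul_lt (by norm_num : (0 : ℝ) < 1 / 3) K
    exact ⟨min ε r, lt_min hε hr, min_le_left _ _,
      (mul_le_mul_of_nonneg_left (min_le_right _ _) K.coe_nonneg).trans hKr.le⟩
  obtain ⟨η, hη, hexp⟩ := hks r hr
  obtain ⟨δ, hδ, hδη, hδr⟩ : ∃ δ > 0, δ * B ≤ η ∧ 2 * δ < r :=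
    ⟨min (η / B) (r / 3), by positivity,
      (le_div_iff₀ hB).1 (min_le_left _ _), by linarith [min_le_right (η / B) (r / 3)]⟩
  refine ⟨δ, hδ, fun x hx y hy h hh hclose t => ?_⟩
  by_cases! hsing : ∃ t₀, X (φ t₀ x) = 0
  · obtain ⟨t₀, h₀⟩ := hsing
    have heq := hflow.eq_of_dist_le_of_velocity_eq_zero hX hvel (hΛM hx) h₀ (hclose t)
    exact (mem_arc_neg_self hε.le).2
      ⟨0, by rw [abs_zero]; exact hε.le, by rw [hflow.2.2.1 _ (hflow.2.1 t (hΛM hx)), heq]⟩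
  · have hspeed : ∀ t, ‖X (φ t x)‖ ≤ B := fun t =>
      hXB _ (mem_image_of_mem X (hflow.2.1 t (hΛM hx)))
    obtain ⟨t₀, ht₀⟩ := hexp x hx y hy h hh fun t =>
      (hclose t).trans ((mul_le_mul_of_nonneg_left (hspeed t) hδ.le).trans hδη)
    obtain ⟨s, hs, hst⟩ := (mem_arc_neg_self hr.le).1 <|
      hflow.mem_arc_of_velocity_ne_zero hX hvel (hΛM hx) (hΛM hy) hh.1.1 hr.le hKr hδr hclose
        hsing ht₀ t
    exact (mem_arc_neg_self hε.le).2 ⟨s, hs.trans hrε, hst⟩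

end RescalingExpansive

/-- Let `M ⊂ ℝ^d` be a compact C² manifold, `φ` a flow on `M`
with C¹ velocity field `X`, and `Λ ⊆ M` a compact `φ`-invariant subset.
If `φ|Λ` is k*-expansive and efficient, then `φ|Λ` is rescaling expansive. -/
theorem kstar_and_efficient_imp_rescaling {d : ℕ}
    (φ : ℝ → Euc d → Euc d) (X : Euc d → Euc d) (M Λ : Set (Euc d))
    (hMc : IsCompact M) (hflow : FlowOn φ M) (hX : ContDiff ℝ 1 X)
    (hvel : ∀ x ∈ M, ∀ t : ℝ, HasDerivAt (fun s : ℝ => φ s x) (X (φ t x)) t)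
    (hΛM : Λ ⊆ M) (hΛc : IsCompact Λ) (hΛinv : ∀ t : ℝ, Set.MapsTo (φ t) Λ Λ)
    (hks : KStarExpansiveOn φ Λ) (heff : Efficient φ X Λ) :
    RescalingExpansive φ X Λ := by
  obtain ⟨K, hK⟩ : ∃ K, LipschitzOnWith K X M :=
    hX.locallyLipschitz.locallyLipschitzOn.exists_lipschitzOnWith_of_compact hMc
  exact kstar_and_efficient_imp_rescaling_general hflow hK
    (hMc.image hX.continuous).isBounded hvel hΛM hks
end
end

section
/- A flow φ of a compact metric space (Λ, dist) is KH-expansive if and only if it is separating and fix(φ) is an open subset of Λ. -/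
open Metric Set Function

noncomputable section

/-- A (global) flow on a topological space: a continuous map `φ : ℝ × Λ → Λ` with
`φ_0 = id` and `φ_{s+t} = φ_s ∘ φ_t`. -/
def IsFlow {α : Type*} [TopologicalSpace α] (φ : ℝ → α → α) : Prop :=
  Continuous (fun p : ℝ × α => φ p.1 p.2) ∧ (∀ x, φ 0 x = x) ∧
    ∀ s t : ℝ, ∀ x, φ (s + t) x = φ s (φ t x)

/-- The set of fixed points of a flow. -/
def fixSet {α : Type*} (φ : ℝ → α → α) : Set α := {σ | ∀ t : ℝ, φ t σ = σ}

/-- `φ` is separating: there is `δ > 0` such that if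
`dist (φ_t x) (φ_t y) < δ` for all `t ∈ ℝ` then `y ∈ φ_ℝ(x)`. -/
def Separating {α : Type*} [MetricSpace α] (φ : ℝ → α → α) : Prop :=
  ∃ δ > (0 : ℝ), ∀ x y : α, (∀ t : ℝ, dist (φ t x) (φ t y) < δ) → y ∈ orb φ x

/-- `φ` is KH-expansive: there is `δ > 0` such that whenever `x ∈ Λ`,
`s : ℝ → ℝ` is continuous with `s 0 = 0`, `dist (φ_t x) (φ_{s t} x) < δ` for all
`t`, and `y` satisfies `dist (φ_t x) (φ_{s t} y) < δ` for all `t`, then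
`y ∈ φ_ℝ(x)`. -/
def KHExpansive {α : Type*} [MetricSpace α] (φ : ℝ → α → α) : Prop :=
  ∃ δ > (0 : ℝ), ∀ x : α, ∀ s : ℝ → ℝ, Continuous s → s 0 = 0 →
    (∀ t : ℝ, dist (φ t x) (φ (s t) x) < δ) →
    ∀ y : α, (∀ t : ℝ, dist (φ t x) (φ (s t) y) < δ) → y ∈ orb φ x

/-!
KH-expansivity specialises to separation for `s = id`, and for `s = 0` and `x` a fixed point it
says that a ball around `x` lies in the orbit of `x`, which is `{x}`. Conversely, if `fixSet φ` is
open then its complement is compact and has no fixed points, so the flow has no small periods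
there, and each small time `t ≠ 0` displaces all of its points by at least some `γ > 0` depending
only on `|t|`. A continuous `s` with `s 0 = 0` which keeps `φ (s t) x` close to `φ t x` can
therefore never leave the band `|s t - t| < ρ`, and a time change by less than `ρ` moves every
point by little. The points of the compact open set `fixSet φ` are at positive distance from all
other points.
-/

open Filter Topology

lemma forall_lt_of_continuous_of_forall_ne {X α : Type*} [TopologicalSpace X]
    [PreconnectedSpace X] [LinearOrder α] [TopologicalSpace α] [OrderClosedTopology α]
    {f : X → α} {a : α} {x₀ : X} (hf : Continuous f) (h₀ : f x₀ < a) (hne : ∀ x, f x ≠ a) (x : X) :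
    f x < a := by
  by_contra! hx
  obtain ⟨y, hy⟩ := mem_range_of_exists_le_of_exists_ge hf ⟨x₀, h₀.le⟩ ⟨x, hx⟩
  exact hne y hy

lemma tendsto_floor_div_mul_nhdsNE_zero (T : ℝ) :
    Tendsto (fun t : ℝ => ⌊T / t⌋ * t) (𝓝[≠] 0) (𝓝 T) := by
  have hbound : ∀ᶠ t : ℝ in 𝓝[≠] 0, dist (⌊T / t⌋ * t) T ≤ |t| := by
    filter_upwards [self_mem_nhdsWithin] with t ht
    have hfract : T - ⌊T / t⌋ * t = Int.fract (T / t) * t := by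
      rw [← Int.self_sub_floor, sub_mul, div_mul_cancel₀ T ht]
    rw [dist_comm, Real.dist_eq, hfract, abs_mul, Int.abs_fract]
    exact mul_le_of_le_one_left (abs_nonneg t) (Int.fract_lt_one _).le
  have hzero : Tendsto (fun t : ℝ => |t|) (𝓝[≠] 0) (𝓝 0) :=
    (continuous_abs.tendsto' 0 0 abs_zero).mono_left nhdsWithin_le_nhds
  exact tendsto_iff_dist_tendsto_zero.2
    (squeeze_zero' (.of_forall fun _ => dist_nonneg) hbound hzero)

namespace IsFlow

variable {Λ : Type*} {φ : ℝ → Λ → Λ}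

section TopologicalSpace

variable [TopologicalSpace Λ]

lemma continuous_uncurry (hφ : IsFlow φ) : Continuous fun p : ℝ × Λ => φ p.1 p.2 := hφ.1

lemma apply_zero (hφ : IsFlow φ) (x : Λ) : φ 0 x = x := hφ.2.1 x

lemma apply_add (hφ : IsFlow φ) (s t : ℝ) (x : Λ) : φ (s + t) x = φ s (φ t x) := hφ.2.2 s t x

lemma apply_sub_apply (hφ : IsFlow φ) (s t : ℝ) (x : Λ) : φ (s - t) (φ t x) = φ s x := by
  rw [← hφ.apply_add, sub_add_cancel]

lemma apply_mem_fixSet_iff (hφ : IsFlow φ) {t : ℝ} {x : Λ} :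
    φ t x ∈ fixSet φ ↔ x ∈ fixSet φ := by
  refine ⟨fun h => ?_, fun h => (h t).symm ▸ h⟩
  have hx : φ t x = x := by rw [← h (0 - t), hφ.apply_sub_apply, hφ.apply_zero]
  rwa [hx] at h

lemma apply_int_mul_of_apply_eq (hφ : IsFlow φ) {c : ℝ} {x : Λ} (h : φ c x = x) (n : ℤ) :
    φ (n * c) x = x := by
  have hperiodic : Function.Periodic (fun t => φ t x) c := fun t => by
    simp only [hφ.apply_add, h]
  simpa only [hφ.apply_zero] using hperiodic.int_mul_eq n

variable [T2Space Λ]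

lemma isClosed_fixSet (hφ : IsFlow φ) : IsClosed (fixSet φ) := by
  simp only [fixSet, Set.ofPred_forall]
  exact isClosed_iInter fun t =>
    isClosed_eq (hφ.continuous_uncurry.comp (.prodMk_right t)) continuous_id

/- If `φ t y = y` then `y` is also fixed by the multiple `⌊T / t⌋ * t` of `t`, which tends to `T`
as `t → 0`. With `φ T x ≠ x` this contradicts continuity at `(T, x)`. -/
lemma eventually_apply_ne (hφ : IsFlow φ) {x : Λ} (hx : x ∉ fixSet φ) :
    ∀ᶠ p : ℝ × Λ in 𝓝[≠] 0 ×ˢ 𝓝 x, φ p.1 p.2 ≠ p.2 := by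
  obtain ⟨T, hT⟩ : ∃ T, φ T x ≠ x := not_forall.1 hx
  have hmoved : ∀ᶠ p in 𝓝 T ×ˢ 𝓝 x, φ p.1 p.2 ≠ p.2 := by
    rw [← nhds_prod_eq]
    exact (isOpen_ne_fun hφ.continuous_uncurry continuous_snd).mem_nhds hT
  have hmultiple := (tendsto_floor_div_mul_nhdsNE_zero T).prodMap (tendsto_id (x := 𝓝 x))
  filter_upwards [hmultiple.eventually hmoved] with p hp hfixed
  exact hp (hφ.apply_int_mul_of_apply_eq hfixed _)

lemma eventually_forall_apply_ne (hφ : IsFlow φ) {K : Set Λ} (hK : IsCompact K)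
    (hfix : Disjoint K (fixSet φ)) : ∀ᶠ t in 𝓝[≠] 0, ∀ x ∈ K, φ t x ≠ x := by
  have hprod : ∀ᶠ p : ℝ × Λ in 𝓝[≠] 0 ×ˢ 𝓝ˢ K, φ p.1 p.2 ≠ p.2 :=
    hK.mem_prod_nhdsSet_of_forall fun _ hx =>
      hφ.eventually_apply_ne (hfix.notMem_of_mem_left hx)
  exact hprod.curry.mono fun _ h => h.self_of_nhdsSet

end TopologicalSpace

lemma exists_forall_dist_apply_lt [PseudoMetricSpace Λ] [CompactSpace Λ] (hφ : IsFlow φ)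
    {r : ℝ} (hr : 0 < r) :
    ∃ ρ > 0, ∀ s t : ℝ, |s - t| < ρ → ∀ x, dist (φ s x) (φ t x) < r := by
  have hunif := hφ.continuous_uncurry.tendstoUniformly φ 0
  obtain ⟨ρ, hρ, hmove⟩ := Metric.eventually_nhds_iff.1 (Metric.tendstoUniformly_iff.1 hunif r hr)
  refine ⟨ρ, hρ, fun s t hst x => ?_⟩
  have hlt := hmove (y := s - t) (by simpa using hst) (φ t x)
  rwa [hφ.apply_zero, hφ.apply_sub_apply, dist_comm] at hlt

section MetricSpace

variable [MetricSpace Λ]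

lemma eventually_exists_forall_le_dist_apply (hφ : IsFlow φ) {K : Set Λ} (hK : IsCompact K)
    (hfix : Disjoint K (fixSet φ)) :
    ∀ᶠ ε in 𝓝[>] (0 : ℝ), ∃ γ > 0, ∀ t, |t| = ε → ∀ x ∈ K, γ ≤ dist x (φ t x) := by
  obtain ⟨η, hη, hne⟩ := Metric.eventually_nhds_iff.1 <|
    eventually_nhdsWithin_iff.1 (hφ.eventually_forall_apply_ne hK hfix)
  filter_upwards [Ioo_mem_nhdsGT hη] with ε hε
  have hpos : ∀ p ∈ sphere (0 : ℝ) ε ×ˢ K, 0 < dist p.2 (φ p.1 p.2) := by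
    rintro ⟨t, x⟩ ⟨ht, hx⟩
    have ht₀ : t ≠ 0 := ne_of_mem_sphere ht hε.1.ne'
    exact dist_pos.2 (hne (ht.trans_lt hε.2) ht₀ x hx).symm
  obtain ⟨γ, hγ, hle⟩ := ((isCompact_sphere 0 ε).prod hK).exists_forall_le'
    (continuous_snd.dist hφ.continuous_uncurry).continuousOn hpos
  exact ⟨γ, hγ, fun t ht x hx => hle (t, x) ⟨mem_sphere_zero_iff_norm.2 ht, hx⟩⟩

lemma exists_forall_abs_sub_lt (hφ : IsFlow φ) {K : Set Λ} (hK : IsCompact K)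
    (hfix : Disjoint K (fixSet φ)) {ρ : ℝ} (hρ : 0 < ρ) :
    ∃ γ > 0, ∀ x, orb φ x ⊆ K → ∀ s : ℝ → ℝ, Continuous s → s 0 = 0 →
      (∀ t, dist (φ t x) (φ (s t) x) < γ) → ∀ t, |s t - t| < ρ := by
  obtain ⟨ε, ⟨γ, hγ, hfar⟩, hε, hερ⟩ :=
    ((hφ.eventually_exists_forall_le_dist_apply hK hfix).and (Ioo_mem_nhdsGT hρ)).exists
  refine ⟨γ, hγ, fun x hx s hs hs₀ hclose t => lt_trans ?_ hερ⟩
  have hne : ∀ t, |s t - t| ≠ ε := fun t ht => by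
    have hγ_le := hfar (s t - t) ht (φ t x) (hx ⟨t, rfl⟩)
    rw [hφ.apply_sub_apply] at hγ_le
    exact (hclose t).not_ge hγ_le
  exact forall_lt_of_continuous_of_forall_ne (x₀ := 0) (hs.sub continuous_id).abs
    (by simpa [hs₀] using hε) hne t

end MetricSpace

end IsFlow

section Expansive

variable {Λ : Type*} [MetricSpace Λ] {φ : ℝ → Λ → Λ}

lemma KHExpansive.separating (h : KHExpansive φ) : Separating φ := by
  obtain ⟨δ, hδ, h⟩ := h
  exact ⟨δ, hδ, fun x y hxy => h x id continuous_id rfl (by simpa using hδ) y hxy⟩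

lemma KHExpansive.isOpen_fixSet (h : KHExpansive φ) (hφ : IsFlow φ) : IsOpen (fixSet φ) := by
  obtain ⟨δ, hδ, h⟩ := h
  refine Metric.isOpen_iff.2 fun σ hσ => ⟨δ, hδ, fun y hy => ?_⟩
  obtain ⟨t, rfl⟩ : y ∈ orb φ σ :=
    h σ (fun _ => 0) continuous_const rfl (fun t => by simpa [hφ.apply_zero, hσ t] using hδ) y
      fun t => by simpa [hφ.apply_zero, hσ t, dist_comm] using hy
  exact hφ.apply_mem_fixSet_iff.2 hσ

lemma Separating.khExpansive [CompactSpace Λ] (h : Separating φ) (hφ : IsFlow φ)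
    (ho : IsOpen (fixSet φ)) : KHExpansive φ := by
  obtain ⟨δ, hδ, hsep⟩ := h
  obtain ⟨ρ, hρ, hmove⟩ := hφ.exists_forall_dist_apply_lt (half_pos hδ)
  obtain ⟨γ, hγ, hband⟩ := hφ.exists_forall_abs_sub_lt ho.isClosed_compl.isCompact
    disjoint_compl_left hρ
  obtain ⟨r, hr, hthick⟩ :=
    hφ.isClosed_fixSet.isCompact.exists_thickening_subset_open ho subset_rfl
  refine ⟨min (δ / 2) (min γ r), by positivity, fun x s hs hs₀ hx y hy => hsep x y fun t => ?_⟩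
  simp only [lt_min_iff] at hx hy
  by_cases hxfix : x ∈ fixSet φ
  · have hy₀ : dist x y < δ / 2 ∧ dist x y < γ ∧ dist x y < r := by
      simpa only [hs₀, hφ.apply_zero] using hy 0
    have hyfix : y ∈ fixSet φ :=
      hthick (Metric.mem_thickening_iff.2 ⟨x, hxfix, dist_comm x y ▸ hy₀.2.2⟩)
    rw [hxfix t, hyfix t]
    exact hy₀.1.trans (half_lt_self hδ)
  · have horb : orb φ x ⊆ (fixSet φ)ᶜ :=
      range_subset_iff.2 fun t => mt hφ.apply_mem_fixSet_iff.1 hxfix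
    have hst : |s t - t| < ρ := hband x horb s hs hs₀ (fun t => (hx t).2.1) t
    calc dist (φ t x) (φ t y)
        ≤ dist (φ t x) (φ (s t) y) + dist (φ (s t) y) (φ t y) := dist_triangle ..
      _ < δ / 2 + δ / 2 := add_lt_add (hy t).1 (hmove _ _ hst y)
      _ = δ := add_halves δ

end Expansive

/-- A flow `φ` of a compact metric space `(Λ, dist)` is
KH-expansive if and only if it is separating and `fix(φ)` is an open subset of
`Λ`. -/
theorem khExpansive_iff_separating_and_isOpen_fixSet
    {Λ : Type*} [MetricSpace Λ] [CompactSpace Λ]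
    (φ : ℝ → Λ → Λ) (hφ : IsFlow φ) :
    KHExpansive φ ↔ Separating φ ∧ IsOpen (fixSet φ) :=
  ⟨fun h => ⟨h.separating, h.isOpen_fixSet hφ⟩, fun h => h.1.khExpansive hφ h.2⟩
end
end

section
/- For a flow φ on a compact metric space (Λ, dist) the following statements are equivalent: (a) φ is k*-expansive; (b) for all β > 0 there is δ > 0 such that if x, y ∈ Λ, h ∈ H⁺₀(ℝ) and dist(φ_t(x), φ_{h(t)}(y)) ≤ δ for all t ∈ ℝ, then y = φ_u(x) for some u ∈ ℝ with diam(φ_{[0,u]}(x)) < β; (c) for all β > 0 there is δ > 0 such that if x, y ∈ Λ, h ∈ H⁺₀(ℝ) and dist(φ_t(x), φ_{h(t)}(y)) ≤ δ for all t ∈ ℝ, then there is g ∈ H⁺(ℝ) such that φ_{h(t)}(y) = φ_{g(t)}(x) for all t ∈ ℝ and diam(φ_{[t,g(t)]}(x)) < β for all t ∈ ℝ. -/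
open Metric Set Function

noncomputable section

/-- (a) `φ` is k*-expansive: for all `ε > 0` there is `δ > 0` such that if
`x, y ∈ Λ`, `h ∈ H⁺₀(ℝ)` and `dist (φ_t x) (φ_{h t} y) ≤ δ` for all `t`, then
`φ_{h t₀} y ∈ φ_{[-ε,ε]} (φ_{t₀} x)` for some `t₀`. -/
def KStarExpansive {α : Type*} [MetricSpace α] (φ : ℝ → α → α) : Prop :=
  ∀ ε > (0 : ℝ), ∃ δ > (0 : ℝ), ∀ x y : α, ∀ h : ℝ → ℝ, IsHplus0 h →
    (∀ t : ℝ, dist (φ t x) (φ (h t) y) ≤ δ) →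
    ∃ t₀ : ℝ, φ (h t₀) y ∈ arc φ (φ t₀ x) (-ε) ε

/-- (b) for all `β > 0` there is `δ > 0` such that if `x, y ∈ Λ`, `h ∈ H⁺₀(ℝ)` and
`dist (φ_t x) (φ_{h t} y) ≤ δ` for all `t`, then `y = φ_u x` for some `u` with
`diam (φ_{[0,u]} x) < β`. -/
def KStarPropB {α : Type*} [MetricSpace α] (φ : ℝ → α → α) : Prop :=
  ∀ β > (0 : ℝ), ∃ δ > (0 : ℝ), ∀ x y : α, ∀ h : ℝ → ℝ, IsHplus0 h →
    (∀ t : ℝ, dist (φ t x) (φ (h t) y) ≤ δ) →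
    ∃ u : ℝ, y = φ u x ∧ Metric.diam (arc φ x 0 u) < β

/-- (c) for all `β > 0` there is `δ > 0` such that if `x, y ∈ Λ`, `h ∈ H⁺₀(ℝ)` and
`dist (φ_t x) (φ_{h t} y) ≤ δ` for all `t`, then there is `g ∈ H⁺(ℝ)` such that
`φ_{h t} y = φ_{g t} x` for all `t`, with `diam (φ_{[t, g t]} x) < β` for all `t`. -/
def KStarPropC {α : Type*} [MetricSpace α] (φ : ℝ → α → α) : Prop :=
  ∀ β > (0 : ℝ), ∃ δ > (0 : ℝ), ∀ x y : α, ∀ h : ℝ → ℝ, IsHplus0 h →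
    (∀ t : ℝ, dist (φ t x) (φ (h t) y) ≤ δ) →
    ∃ g : ℝ → ℝ, IsHplus g ∧ (∀ t : ℝ, φ (h t) y = φ (g t) x) ∧
      ∀ t : ℝ, Metric.diam (arc φ x t (g t)) < β

open Filter Topology TopologicalSpace

/-!
If the orbit of `y` meets the orbit of `x`, then `φ_{h t} y = φ_{g t} x` where `g` is a translate
of `h`; the point is that the segments `φ_{[t, g t]} x` stay small. Their diameter depends
continuously on `t` and is small for one `t`, and their endpoints are `δ`-close, so it is enough
that no orbit segment with `δ`-close endpoints has diameter exactly `η`. Such a segment is moved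
very little, in the Hausdorff metric, by the flow during a fixed positive time. As `δ → 0` a
Hausdorff limit of such segments is an invariant compact set of diameter `η`. But expansiveness
isolates every fixed point from all other orbits, and this forces small invariant sets to be single
fixed points.

Conversely, away from the fixed points segments of small diameter last a short time, so a bound on
diameters gives a bound on times; and an orbit that stays near the fixed points is a fixed point.
-/

section General

lemma forall_lt_of_forall_ne {X α : Type*} [TopologicalSpace X] [PreconnectedSpace X]
    [LinearOrder α] [TopologicalSpace α] [OrderClosedTopology α] {f : X → α} (hf : Continuous f)
    {c : α} {x₀ : X} (h₀ : f x₀ < c) (hne : ∀ x, f x ≠ c) (x : X) : f x < c := by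
  by_contra! hx
  obtain ⟨y, hy⟩ := mem_range_of_exists_le_of_exists_ge hf ⟨x₀, h₀.le⟩ ⟨x, hx⟩
  exact hne y hy

lemma exists_gt_forall_exists_lt_of_isCompact {X ι α : Type*} [TopologicalSpace X] [LinearOrder α]
    [DenselyOrdered α] [NoMaxOrder α] {K : Set X} (hK : IsCompact K) {f : ι → X → α}
    (hf : ∀ i, LowerSemicontinuousOn (f i) K) {a : α} (ha : ∀ x ∈ K, ∃ i, a < f i x) :
    ∃ δ > a, ∀ x ∈ K, ∃ i, δ < f i x := by
  refine hK.induction_on (p := fun S => ∃ δ > a, ∀ x ∈ S, ∃ i, δ < f i x) ?_ ?_ ?_ ?_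
  · obtain ⟨δ, hδ⟩ := exists_gt a
    exact ⟨δ, hδ, by simp⟩
  · rintro S T hST ⟨δ, hδ, hT⟩
    exact ⟨δ, hδ, fun x hx => hT x (hST hx)⟩
  · rintro S T ⟨δ, hδ, hS⟩ ⟨δ', hδ', hT⟩
    refine ⟨min δ δ', lt_min hδ hδ', ?_⟩
    rintro x (hx | hx)
    · exact (hS x hx).imp fun _ => (min_le_left _ _).trans_lt
    · exact (hT x hx).imp fun _ => (min_le_right _ _).trans_lt
  · intro x hx
    obtain ⟨i, hi⟩ := ha x hx
    obtain ⟨δ, hδ, hδi⟩ := exists_between hi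
    exact ⟨_, hf i x hx δ hδi, δ, hδ, fun y hy => ⟨i, hy⟩⟩

lemma diam_le_diam_add_two_mul_hausdorffDist {X : Type*} [PseudoMetricSpace X] {s t : Set X}
    (ht : Bornology.IsBounded t) (hst : hausdorffEDist s t ≠ ⊤) :
    diam s ≤ diam t + 2 * hausdorffDist s t := by
  have hnonneg : 0 ≤ diam t + 2 * hausdorffDist s t :=
    add_nonneg diam_nonneg (mul_nonneg zero_le_two hausdorffDist_nonneg)
  refine diam_le_of_forall_dist_le hnonneg fun x hx y hy =>
    le_of_forall_pos_le_add fun ε hε => ?_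
  have hlt : hausdorffDist s t < hausdorffDist s t + ε / 2 := by linarith
  obtain ⟨x', hx', hxx'⟩ := exists_dist_lt_of_hausdorffDist_lt hx hlt hst
  obtain ⟨y', hy', hyy'⟩ := exists_dist_lt_of_hausdorffDist_lt hy hlt hst
  calc dist x y ≤ dist x x' + dist x' y' + dist y' y := dist_triangle4 x x' y' y
    _ ≤ (hausdorffDist s t + ε / 2) + diam t + (hausdorffDist s t + ε / 2) := by
        rw [dist_comm y' y]
        gcongr
        exact dist_le_diam_of_mem ht hx' hy'
    _ = diam t + 2 * hausdorffDist s t + ε := by ring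

lemma lipschitz_diam {X : Type*} [MetricSpace X] :
    LipschitzWith 2 fun K : NonemptyCompacts X => diam (K : Set X) :=
  LipschitzWith.of_le_add_mul 2 fun K L =>
    diam_le_diam_add_two_mul_hausdorffDist L.isCompact.isBounded (edist_ne_top K L)

end General

protected lemma IsHplus0.id : IsHplus0 id :=
  ⟨⟨continuous_id, strictMono_id, surjective_id⟩, rfl⟩

lemma IsHplus.add_const {h : ℝ → ℝ} (hh : IsHplus h) (c : ℝ) : IsHplus fun t => h t + c :=
  ⟨hh.1.add continuous_const, hh.2.1.add_const c, (add_right_surjective c).comp hh.2.2⟩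

lemma IsHplus.comp_add_const {h : ℝ → ℝ} (hh : IsHplus h) (c : ℝ) : IsHplus fun t => h (t + c) :=
  ⟨hh.1.comp (continuous_add_const c), hh.2.1.comp (strictMono_id.add_const c),
    hh.2.2.comp (add_right_surjective c)⟩

section Arc

variable {X : Type*} {φ : ℝ → X → X} {x : X}

lemma arc_comm (φ : ℝ → X → X) (x : X) (a b : ℝ) : arc φ x a b = arc φ x b a := by
  rw [arc, uIcc_comm, arc]

lemma mem_arc_of_mem_uIcc {a b t : ℝ} (ht : t ∈ uIcc a b) : φ t x ∈ arc φ x a b :=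
  mem_image_of_mem _ ht

lemma arc_subset_arc {a b c d : ℝ} (h : uIcc a b ⊆ uIcc c d) : arc φ x a b ⊆ arc φ x c d :=
  image_mono h

end Arc

namespace IsFlow

section Topological

variable {X : Type*} [TopologicalSpace X] {φ : ℝ → X → X}

lemma continuous_apply (hφ : IsFlow φ) (x : X) : Continuous fun t => φ t x :=
  hφ.1.comp (Continuous.prodMk_left x)

lemma continuous_map (hφ : IsFlow φ) (t : ℝ) : Continuous (φ t) :=
  hφ.1.comp (Continuous.prodMk_right t)

lemma isCompact_arc (hφ : IsFlow φ) (x : X) (a b : ℝ) : IsCompact (arc φ x a b) :=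
  isCompact_uIcc.image (hφ.continuous_apply x)

lemma arc_apply (hφ : IsFlow φ) (x : X) (a b s : ℝ) :
    arc φ (φ s x) a b = arc φ x (a + s) (b + s) := by
  simp only [arc, ← image_add_const_uIcc, image_image, hφ.2.2]

lemma exists_isHplus_apply_eq (hφ : IsFlow φ) {h : ℝ → ℝ} (hh : IsHplus h) {x y : X} {t₀ u : ℝ}
    (hu : φ (h t₀) y = φ u x) :
    ∃ g, IsHplus g ∧ g t₀ = u ∧ ∀ t, φ (h t) y = φ (g t) x := by
  refine ⟨fun t => h t + (u - h t₀), hh.add_const _, add_sub_cancel _ _, fun t => ?_⟩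
  calc φ (h t) y = φ (h t - h t₀) (φ (h t₀) y) := by rw [← hφ.2.2, sub_add_cancel]
    _ = φ (h t - h t₀ + u) x := by rw [hu, hφ.2.2]
    _ = φ (h t + (u - h t₀)) x := by rw [sub_add_eq_add_sub, add_sub_assoc]

lemma isInvariant_of_forall_Icc (hφ : IsFlow φ) {C : Set X} {τ : ℝ} (hτ : 0 < τ)
    (h : ∀ s ∈ Icc 0 τ, φ s '' C = C) : IsInvariant φ C := fun t => by
  have hper : Function.Periodic (fun t => φ t '' C) τ := fun t => by
    simp only [hφ.2.2, ← image_image (φ t) (φ τ), h τ ⟨hτ.le, le_rfl⟩]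
  obtain ⟨s, hs, hst⟩ := hper.exists_mem_Ico₀ hτ t
  exact mapsTo_iff_image_subset.2 (hst.trans (h s ⟨hs.1, hs.2.le⟩)).subset

lemma mem_fixSet_of_arc_subsingleton (hφ : IsFlow φ) {x : X} {a b : ℝ} (hab : a ≠ b)
    (h : (arc φ x a b).Subsingleton) : x ∈ fixSet φ := by
  wlog hlt : a < b generalizing a b
  · exact this hab.symm (arc_comm φ x a b ▸ h) (hab.lt_or_gt.resolve_left hlt)
  have hinv : IsInvariant φ {φ a x} := by
    refine hφ.isInvariant_of_forall_Icc (sub_pos.2 hlt) fun s hs => ?_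
    rw [image_singleton, ← hφ.2.2]
    refine congrArg _ (h (mem_arc_of_mem_uIcc ?_) (mem_arc_of_mem_uIcc left_mem_uIcc))
    rw [uIcc_of_le hlt.le]
    constructor <;> linarith [hs.1, hs.2]
  have hconst : ∀ t, φ t x = φ a x := fun t => by
    simpa only [mapsTo_singleton, mem_singleton_iff, ← hφ.2.2, sub_add_cancel]
      using hinv (t - a)
  exact fun t => by rw [hconst, ← hconst 0, hφ.2.1]

end Topological

section Metric

variable {X : Type*} [MetricSpace X] {φ : ℝ → X → X}

lemma continuous_diam_arc (hφ : IsFlow φ) :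
    Continuous fun p : X × ℝ × ℝ => diam (arc φ p.1 p.2.1 p.2.2) := by
  let I : NonemptyCompacts ℝ := ⟨⟨Icc 0 1, isCompact_Icc⟩, nonempty_Icc.2 zero_le_one⟩
  let γ : X × ℝ × ℝ → ℝ → X := fun p c => φ (p.2.1 + c * (p.2.2 - p.2.1)) p.1
  have hγ : Continuous (uncurry γ) :=
    hφ.1.comp (f := fun q : (X × ℝ × ℝ) × ℝ => (q.1.2.1 + q.2 * (q.1.2.2 - q.1.2.1), q.1.1))
      (by fun_prop)
  have harc : ∀ p : X × ℝ × ℝ, arc φ p.1 p.2.1 p.2.2 = γ p '' Icc 0 1 := fun p => by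
    simp only [arc, ← segment_eq_uIcc, segment_eq_image', image_image, smul_eq_mul, γ]
  simp only [harc]
  exact lipschitz_diam.continuous.comp
    ((continuous_const (y := I)).nonemptyCompacts_map' hγ)

lemma exists_forall_mem_le_diam_arc (hφ : IsFlow φ) {K : Set X} (hK : IsCompact K)
    (hKφ : Disjoint K (fixSet φ)) {a b : ℝ} (hab : a ≠ b) :
    ∃ β > 0, ∀ x ∈ K, β ≤ diam (arc φ x a b) := by
  have hcont : Continuous fun x => diam (arc φ x a b) :=
    hφ.continuous_diam_arc.comp (f := fun x => (x, a, b)) (by fun_prop)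
  refine hK.exists_forall_le' hcont.continuousOn fun x hx => ?_
  refine diam_pos (not_subsingleton_iff.1 fun hsub => ?_) (hφ.isCompact_arc x a b).isBounded
  exact hKφ.notMem_of_mem_left hx (hφ.mem_fixSet_of_arc_subsingleton hab hsub)

lemma hausdorffDist_image_arc_le (hφ : IsFlow φ) {x : X} {a b s ε : ℝ} (hs : s ∈ Icc 0 (b - a))
    (hε : ∀ τ ∈ Icc 0 s, dist (φ τ (φ a x)) (φ τ (φ b x)) ≤ ε) :
    hausdorffDist (φ s '' arc φ x a b) (arc φ x a b) ≤ ε := by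
  have hab : a ≤ b := by linarith [hs.1, hs.2]
  have hclose : ∀ τ ∈ Icc 0 s, dist (φ (τ + a) x) (φ (τ + b) x) ≤ ε := by
    simpa only [hφ.2.2] using hε
  have hε₀ : 0 ≤ ε := dist_nonneg.trans (hε 0 ⟨le_rfl, hs.1⟩)
  have himage : φ s '' arc φ x a b = (fun t => φ (s + t) x) '' Icc a b := by
    simp only [arc, uIcc_of_le hab, image_image, hφ.2.2]
  rw [himage, arc, uIcc_of_le hab]
  refine hausdorffDist_le_of_mem_dist hε₀ ?_ ?_
  · rintro _ ⟨t, ht, rfl⟩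
    rcases le_total (s + t) b with hle | hge
    · exact ⟨_, ⟨s + t, ⟨by linarith [hs.1, ht.1], hle⟩, rfl⟩, by simpa using hε₀⟩
    · have h := hclose (s + t - b) ⟨by linarith, by linarith [ht.2]⟩
      rw [sub_add_cancel, dist_comm] at h
      exact ⟨_, ⟨s + t - b + a, ⟨by linarith, by linarith [hs.2, ht.2]⟩, rfl⟩, h⟩
  · rintro _ ⟨t, ht, rfl⟩
    rcases le_total (a + s) t with hle | hge
    · exact ⟨_, ⟨t - s, ⟨by linarith, by linarith [hs.1, ht.2]⟩, rfl⟩, by simpa using hε₀⟩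
    · have h := hclose (t - a) ⟨by linarith [ht.1], by linarith⟩
      rw [sub_add_cancel] at h
      refine ⟨_, ⟨t - a + b - s, ⟨by linarith [hs.2, ht.1], by linarith⟩, rfl⟩, ?_⟩
      simpa only [add_sub_cancel] using h

variable [CompactSpace X]

lemma exists_forall_dist_apply_lt_s3 (hφ : IsFlow φ) {I : Set ℝ} (hI : IsCompact I) {ε : ℝ}
    (hε : 0 < ε) : ∃ δ > 0, ∀ x y, dist x y < δ → ∀ t ∈ I, dist (φ t x) (φ t y) < ε := by
  obtain ⟨δ, hδ, h⟩ := Metric.uniformContinuousOn_iff.1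
    ((hI.prod isCompact_univ).uniformContinuousOn_of_continuous hφ.1.continuousOn) ε hε
  refine ⟨δ, hδ, fun x y hxy t ht => h (t, x) ⟨ht, mem_univ x⟩ (t, y) ⟨ht, mem_univ y⟩ ?_⟩
  simpa [Prod.dist_eq, hδ] using hxy

lemma exists_forall_diam_arc_lt (hφ : IsFlow φ) {ρ : ℝ} (hρ : 0 < ρ) :
    ∃ ε > 0, ∀ x a b, |b - a| < ε → diam (arc φ x a b) < ρ := by
  have hev : ∀ᶠ s in 𝓝 (0 : ℝ), ∀ x ∈ (univ : Set X), diam (arc φ x 0 s) < ρ := by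
    refine isCompact_univ.eventually_forall_of_forall_eventually fun x _ => ?_
    have hcont : Continuous fun p : ℝ × X => diam (arc φ p.2 0 p.1) :=
      hφ.continuous_diam_arc.comp (f := fun p : ℝ × X => (p.2, (0 : ℝ), p.1)) (by fun_prop)
    exact hcont.tendsto (0, x) |>.eventually_lt_const (by simpa [arc] using hρ)
  obtain ⟨ε, hε, h⟩ := Metric.eventually_nhds_iff.1 hev
  refine ⟨ε, hε, fun x a b hab => ?_⟩
  have := h (y := b - a) (by simpa using hab) (φ a x) (mem_univ _)
  rwa [hφ.arc_apply, zero_add, sub_add_cancel] at this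

lemma exists_forall_dist_fixSet_lt_of_diam_arc_lt (hφ : IsFlow φ) {r : ℝ} (hr : 0 < r) {a b : ℝ}
    (hab : a ≠ b) :
    ∃ β > 0, ∀ x, diam (arc φ x a b) < β → ∃ σ ∈ fixSet φ, dist x σ < r := by
  let K := {x | ∀ σ ∈ fixSet φ, r ≤ dist x σ}
  have hK : IsClosed K := by
    simp only [K, ofPred_forall]
    exact isClosed_biInter fun σ _ => isClosed_le continuous_const (by fun_prop)
  have hKφ : Disjoint K (fixSet φ) :=
    Set.disjoint_left.2 fun x hx hxφ => (hx x hxφ).not_gt (by simpa using hr)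
  obtain ⟨β, hβ, h⟩ := hφ.exists_forall_mem_le_diam_arc hK.isCompact hKφ hab
  refine ⟨β, hβ, fun x hx => ?_⟩
  by_contra! hfar
  exact (h x hfar).not_gt hx

lemma exists_forall_abs_le_of_diam_arc_lt (hφ : IsFlow φ) {r ε : ℝ} (hr : 0 < r) (hε : 0 < ε) :
    ∃ β > 0, ∀ x u, (∀ σ ∈ fixSet φ, r ≤ dist x σ) → diam (arc φ x 0 u) < β → |u| ≤ ε := by
  obtain ⟨β₁, hβ₁, hpos⟩ := hφ.exists_forall_dist_fixSet_lt_of_diam_arc_lt hr hε.ne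
  obtain ⟨β₂, hβ₂, hneg⟩ :=
    hφ.exists_forall_dist_fixSet_lt_of_diam_arc_lt hr (neg_lt_zero.2 hε).ne'
  refine ⟨min β₁ β₂, lt_min hβ₁ hβ₂, fun x u hfar hu => ?_⟩
  have hmono : ∀ v ∈ uIcc 0 u, diam (arc φ x 0 v) ≤ diam (arc φ x 0 u) := fun v hv =>
    diam_mono (arc_subset_arc (uIcc_subset_uIcc_left hv)) (hφ.isCompact_arc x 0 u).isBounded
  by_contra! hεu
  obtain ⟨σ, hσ, hxσ⟩ : ∃ σ ∈ fixSet φ, dist x σ < r := by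
    rcases lt_abs.1 hεu with h | h
    · refine hpos x ((hmono ε ?_).trans_lt (hu.trans_le (min_le_left _ _)))
      exact mem_uIcc_of_le hε.le h.le
    · refine hneg x ((hmono (-ε) ?_).trans_lt (hu.trans_le (min_le_right _ _)))
      exact mem_uIcc_of_ge (by linarith) (by linarith)
  exact (hfar σ hσ).not_gt hxσ

lemma exists_forall_lt_hausdorffDist_image (hφ : IsFlow φ) {η τ : ℝ}
    (hη : ∀ C, IsInvariant φ C → diam C ≠ η) (hτ : 0 < τ) :
    ∃ δ > 0, ∀ K : NonemptyCompacts X, diam (K : Set X) = η →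
      ∃ s ∈ Icc 0 τ, δ < hausdorffDist (φ s '' K) K := by
  have hcompact : IsCompact {K : NonemptyCompacts X | diam (K : Set X) = η} :=
    (isClosed_eq lipschitz_diam.continuous continuous_const).isCompact
  let f : Icc 0 τ → NonemptyCompacts X → ℝ := fun s K =>
    dist (K.map (φ s) (hφ.continuous_map s)) K
  have hf : ∀ s, Continuous (f s) := fun s =>
    (hφ.continuous_map s).nonemptyCompacts_map.dist continuous_id
  have hmoved : ∀ K ∈ {K : NonemptyCompacts X | diam (K : Set X) = η}, ∃ s, 0 < f s K := by
    intro K hK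
    by_contra! h
    refine hη K (hφ.isInvariant_of_forall_Icc hτ fun s hs => ?_) hK
    exact congrArg SetLike.coe (dist_le_zero.1 (h ⟨s, hs⟩))
  obtain ⟨δ, hδ, h⟩ := exists_gt_forall_exists_lt_of_isCompact hcompact
    (fun s => (hf s).lowerSemicontinuous.lowerSemicontinuousOn _) hmoved
  refine ⟨δ, hδ, fun K hK => ?_⟩
  obtain ⟨⟨s, hs⟩, hsK⟩ := h K hK
  exact ⟨s, hs, hsK⟩

lemma exists_forall_diam_arc_ne (hφ : IsFlow φ) {η : ℝ} (hη₀ : 0 < η)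
    (hη : ∀ C, IsInvariant φ C → diam C ≠ η) :
    ∃ δ > 0, ∀ x a b, dist (φ a x) (φ b x) < δ → diam (arc φ x a b) ≠ η := by
  obtain ⟨τ, hτ, hshort⟩ := hφ.exists_forall_diam_arc_lt hη₀
  obtain ⟨ε, hε, hmoved⟩ := hφ.exists_forall_lt_hausdorffDist_image hη hτ
  obtain ⟨δ, hδ, hclose⟩ := hφ.exists_forall_dist_apply_lt_s3 (isCompact_Icc (a := 0) (b := τ)) hε
  refine ⟨δ, hδ, fun x a b hab hdiam => ?_⟩
  wlog hle : a ≤ b generalizing a b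
  · exact this b a (by rwa [dist_comm]) (by rwa [arc_comm]) (le_of_not_ge hle)
  have hlong : τ ≤ b - a := by
    by_contra! hlt
    exact (hshort x a b (by rwa [abs_of_nonneg (sub_nonneg.2 hle)])).ne hdiam
  let K : NonemptyCompacts X :=
    ⟨⟨arc φ x a b, hφ.isCompact_arc x a b⟩, ⟨φ a x, mem_arc_of_mem_uIcc left_mem_uIcc⟩⟩
  obtain ⟨s, hs, hεs⟩ := hmoved K hdiam
  refine hεs.not_ge (hφ.hausdorffDist_image_arc_le ⟨hs.1, hs.2.trans hlong⟩ fun t ht => ?_)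
  exact (hclose _ _ hab t ⟨ht.1, ht.2.trans hs.2⟩).le

end Metric

end IsFlow

/-- Fixed points are dynamically isolated at scale `r`: the only orbit contained in the closed
`r`-ball around a fixed point is that fixed point. The constant is the same for all fixed points. -/
def IsFixIsolating {X : Type*} [MetricSpace X] (φ : ℝ → X → X) (r : ℝ) : Prop :=
  ∀ σ ∈ fixSet φ, ∀ y, (∀ t, dist (φ t y) σ ≤ r) → y = σ

section Isolation

variable {X : Type*} [MetricSpace X] {φ : ℝ → X → X}

lemma KStarExpansive.exists_isFixIsolating (hφ : IsFlow φ) (ha : KStarExpansive φ) :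
    ∃ r > 0, IsFixIsolating φ r := by
  obtain ⟨r, hr, h⟩ := ha 1 one_pos
  refine ⟨r, hr, fun σ hσ y hy => ?_⟩
  obtain ⟨t, s, -, hs⟩ := h σ y id .id fun t => by rw [hσ t, dist_comm]; exact hy t
  have ht : φ t y = σ := by simpa only [hσ t, hσ s, id, eq_comm] using hs
  rw [← hφ.2.1 y, ← neg_add_cancel t, hφ.2.2, ht, hσ]

lemma KStarPropB.exists_isFixIsolating (hb : KStarPropB φ) :
    ∃ r > 0, IsFixIsolating φ r := by
  obtain ⟨r, hr, h⟩ := hb 1 one_pos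
  refine ⟨r, hr, fun σ hσ y hy => ?_⟩
  obtain ⟨u, hu, -⟩ := h σ y id .id fun t => by rw [hσ t, dist_comm]; exact hy t
  rw [hu, hσ]

namespace IsFixIsolating

variable {r : ℝ}

lemma mem_fixSet_of_forall_exists_dist_lt (hφ : IsFlow φ) (hr : IsFixIsolating φ r) {x : X}
    (hx : ∀ t, ∃ σ ∈ fixSet φ, dist (φ t x) σ < r / 2) : x ∈ fixSet φ := by
  obtain ⟨σ, hσ, hxσ⟩ := hx 0
  have hr₀ : 0 < r / 2 := dist_nonneg.trans_lt hxσ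
  have hne : ∀ t, dist (φ t x) σ ≠ r / 2 := fun t ht => by
    obtain ⟨τ, hτ, hxτ⟩ := hx t
    have hτσ : τ = σ := hr σ hσ τ fun s => by
      rw [hτ s]
      linarith [dist_triangle_left τ σ (φ t x)]
    exact (hτσ ▸ hxτ).ne ht
  have hlt := forall_lt_of_forall_ne ((hφ.continuous_apply x).dist continuous_const) hxσ hne
  exact hr σ hσ x (fun t => by linarith [hlt t]) ▸ hσ

lemma exists_forall_subsingleton_of_isInvariant [CompactSpace X] (hφ : IsFlow φ)
    (hr : IsFixIsolating φ r) (hr₀ : 0 < r) :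
    ∃ η > 0, ∀ C, IsInvariant φ C → diam C ≤ η → C.Subsingleton := by
  obtain ⟨β, hβ, hnear⟩ :=
    hφ.exists_forall_dist_fixSet_lt_of_diam_arc_lt (half_pos hr₀) (zero_ne_one (α := ℝ))
  obtain ⟨η, hη, hηlt⟩ := exists_between (lt_min hβ (half_pos hr₀))
  refine ⟨η, hη, fun C hC hdiam => C.eq_empty_or_nonempty.elim (by simp +contextual) ?_⟩
  rintro ⟨z, hz⟩
  have hbdd : Bornology.IsBounded C := isBounded_of_compactSpace
  have harc : arc φ z 0 1 ⊆ C := image_subset_iff.2 fun t _ => hC t hz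
  obtain ⟨σ, hσ, hzσ⟩ := hnear z <|
    ((diam_mono harc hbdd).trans hdiam).trans_lt (hηlt.trans_le (min_le_left _ _))
  have hCσ : ∀ w ∈ C, w = σ := fun w hw => hr σ hσ w fun t =>
    calc dist (φ t w) σ ≤ dist (φ t w) z + dist z σ := dist_triangle _ _ _
      _ ≤ r / 2 + r / 2 := by
        gcongr
        exact (dist_le_diam_of_mem hbdd (hC t hw) hz).trans
          (hdiam.trans (hηlt.le.trans (min_le_right _ _)))
      _ = r := add_halves r
  exact fun v hv w hw => (hCσ v hv).trans (hCσ w hw).symm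

end IsFixIsolating

end Isolation

section Implications

variable {X : Type*} [MetricSpace X] {φ : ℝ → X → X}

lemma KStarExpansive.kStarPropC [CompactSpace X] (hφ : IsFlow φ) (ha : KStarExpansive φ) :
    KStarPropC φ := by
  intro β hβ
  obtain ⟨r, hr₀, hr⟩ := ha.exists_isFixIsolating hφ
  obtain ⟨η₀, hη₀, hsub⟩ := hr.exists_forall_subsingleton_of_isInvariant hφ hr₀
  obtain ⟨η, hη, hηlt⟩ := exists_between (lt_min hη₀ hβ)
  have hne : ∀ C, IsInvariant φ C → diam C ≠ η := fun C hC hdiam => by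
    have hle : diam C ≤ η₀ := hdiam.trans_le (hηlt.le.trans (min_le_left _ _))
    exact hη.ne ((diam_subsingleton (hsub C hC hle)).symm.trans hdiam)
  obtain ⟨δ₁, hδ₁, hclose⟩ := hφ.exists_forall_diam_arc_ne hη hne
  obtain ⟨ε, hε, hshort⟩ := hφ.exists_forall_diam_arc_lt hη
  obtain ⟨δ₂, hδ₂, hexp⟩ := ha (ε / 2) (half_pos hε)
  obtain ⟨δ, hδ, hδlt⟩ := exists_between (lt_min hδ₁ hδ₂)
  refine ⟨δ, hδ, fun x y h hh hxy => ?_⟩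
  obtain ⟨t₀, s, hs, hst⟩ :=
    hexp x y h hh fun t => (hxy t).trans (hδlt.le.trans (min_le_right _ _))
  obtain ⟨g, hg, hgt₀, hgy⟩ := hφ.exists_isHplus_apply_eq hh.1 (t₀ := t₀) (u := s + t₀)
    (hst.symm.trans (hφ.2.2 s t₀ x).symm)
  have hstart : diam (arc φ x t₀ (g t₀)) < η := by
    refine hshort x t₀ (g t₀) ?_
    rw [uIcc_of_le (by linarith)] at hs
    rw [hgt₀, add_sub_cancel_right]
    exact (abs_le.2 hs).trans_lt (half_lt_self hε)
  have hcont : Continuous fun t => diam (arc φ x t (g t)) :=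
    hφ.continuous_diam_arc.comp (f := fun t => (x, t, g t))
      (continuous_const.prodMk (continuous_id.prodMk hg.1))
  refine ⟨g, hg, hgy, fun t => ?_⟩
  refine (forall_lt_of_forall_ne hcont hstart (fun t => hclose x t (g t) ?_) t).trans
    (hηlt.trans_le (min_le_right _ _))
  rw [← hgy]
  exact (hxy t).trans_lt (hδlt.trans_le (min_le_left _ _))

lemma KStarPropC.kStarPropB (hφ : IsFlow φ) (hc : KStarPropC φ) : KStarPropB φ := by
  intro β hβ
  obtain ⟨δ, hδ, h⟩ := hc β hβ
  refine ⟨δ, hδ, fun x y k hk hxy => ?_⟩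
  obtain ⟨g, -, hg, hdiam⟩ := h x y k hk hxy
  exact ⟨g 0, by rw [← hg 0, hk.2, hφ.2.1], hdiam 0⟩

lemma KStarPropB.kStarExpansive [CompactSpace X] (hφ : IsFlow φ) (hb : KStarPropB φ) :
    KStarExpansive φ := by
  intro ε hε
  obtain ⟨r, hr₀, hr⟩ := hb.exists_isFixIsolating
  obtain ⟨β, hβ, hshort⟩ := hφ.exists_forall_abs_le_of_diam_arc_lt (half_pos hr₀) hε
  obtain ⟨δ, hδ, h⟩ := hb β hβ
  refine ⟨δ, hδ, fun x y k hk hxy => ?_⟩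
  simp only [arc, uIcc_of_le (neg_le_self hε.le)]
  by_cases hfar : ∃ t₀, ∀ σ ∈ fixSet φ, r / 2 ≤ dist (φ t₀ x) σ
  · obtain ⟨t₀, ht₀⟩ := hfar
    obtain ⟨u, hu, hdiam⟩ := h (φ t₀ x) (φ (k t₀) y) (fun t => k (t + t₀) + -k t₀)
      ⟨(hk.1.comp_add_const t₀).add_const _, by simp⟩ fun t => by
        simpa only [← hφ.2.2, neg_add_cancel_right] using hxy (t + t₀)
    exact ⟨t₀, u, abs_le.1 (hshort _ u ht₀ hdiam), hu.symm⟩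
  · push Not at hfar
    have hx : x ∈ fixSet φ := hr.mem_fixSet_of_forall_exists_dist_lt hφ hfar
    obtain ⟨u, hu, -⟩ := h x y k hk hxy
    refine ⟨0, 0, ⟨neg_nonpos.2 hε.le, hε.le⟩, ?_⟩
    simp only [hφ.2.1, hk.2, hu, hx u]

end Implications

/-- For a flow `φ` on a compact metric space `(Λ, dist)` the
statements (a), (b), (c) above are equivalent. -/
theorem kStarExpansive_tfae
    {Λ : Type*} [MetricSpace Λ] [CompactSpace Λ]
    (φ : ℝ → Λ → Λ) (hφ : IsFlow φ) :
    (KStarExpansive φ ↔ KStarPropB φ) ∧ (KStarExpansive φ ↔ KStarPropC φ) := by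
  have hac : KStarExpansive φ → KStarPropC φ := KStarExpansive.kStarPropC hφ
  have hcb : KStarPropC φ → KStarPropB φ := KStarPropC.kStarPropB hφ
  have hba : KStarPropB φ → KStarExpansive φ := KStarPropB.kStarExpansive hφ
  exact ⟨⟨hcb ∘ hac, hba⟩, ⟨hac, hba ∘ hcb⟩⟩
end
end

section
/- Let φ be a flow on a compact C² manifold M ⊂ ℝ^d with C¹ velocity field X. If every fixed point of φ is hyperbolic, then φ is efficient. -/
open Metric Set Function

noncomputable section

/-- A fixed point `σ` is hyperbolic: the (complexified) derivative `d_σX` has no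
eigenvalue with zero real part. -/
def HyperbolicFixed {d : ℕ} (X : Euc d → Euc d) (σ : Euc d) : Prop :=
  ∀ μ : ℂ, Module.End.HasEigenvalue
      (LinearMap.baseChange ℂ (fderiv ℝ X σ).toLinearMap) μ → μ.re ≠ 0

/-!
A hyperbolic zero of `X` carries a quadratic form that increases along nearby orbits at a rate
proportional to the squared distance to the zero. Hence an orbit segment of duration at least `τ`
that stays near the zero moves its endpoint by an amount proportional to the initial distance, and
so to the initial speed. Away from the zeros, segments of duration at least `τ` have diameter
bounded below. By compactness, a segment of small diameter whose endpoint is close to its start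
relative to the speed there has duration less than `τ`. On such a short segment the velocity is
nearly constant, so the distance to the start increases with time and is largest at the endpoint.
-/

open scoped NNReal Topology

section HyperbolicLinear

open InnerProductSpace
open scoped TensorProduct

/-- A linear vector field is hyperbolic if its complexification has no eigenvalue on the imaginary
axis; `HyperbolicFixed X σ` is this notion for `fderiv ℝ X σ`. -/
def IsHyperbolic {V : Type*} [AddCommGroup V] [Module ℝ V] (A : V →ₗ[ℝ] V) : Prop :=
  ∀ μ : ℂ, Module.End.HasEigenvalue (A.baseChange ℂ) μ → μ.re ≠ 0

/-- Along the orbits of the linear vector field `A`, some continuous quadratic form `b y y`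
increases at a rate of at least `c * ‖y‖ ^ 2`. In finite dimension this is what hyperbolicity
provides; stated in this way it makes sense in every normed space. -/
def HasLyapunovForm {E : Type*} [NormedAddCommGroup E] [NormedSpace ℝ E] (A : E →L[ℝ] E) : Prop :=
  ∃ b : E →L[ℝ] E →L[ℝ] ℝ, ∃ c > 0, ∀ y, c * ‖y‖ ^ 2 ≤ b (A y) y + b y (A y)

section Complexification

variable {V W : Type*} [AddCommGroup V] [Module ℝ V] [AddCommGroup W] [Module ℝ W]

theorem exists_eq_one_tmul_add_I_tmul (w : ℂ ⊗[ℝ] V) :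
    ∃ u v : V, w = (1 : ℂ) ⊗ₜ[ℝ] u + Complex.I ⊗ₜ[ℝ] v := by
  obtain ⟨c, rfl⟩ := TensorProduct.eq_repr_basis_left Complex.basisOneI w
  exact ⟨c 0, c 1, by simp [Finsupp.sum_fintype]⟩

theorem one_tmul_add_I_tmul_inj {u v u' v' : V} :
    (1 : ℂ) ⊗ₜ[ℝ] u + Complex.I ⊗ₜ[ℝ] v = (1 : ℂ) ⊗ₜ[ℝ] u' + Complex.I ⊗ₜ[ℝ] v' ↔
      u = u' ∧ v = v' := by
  refine ⟨fun h => ⟨?_, ?_⟩, by rintro ⟨rfl, rfl⟩; rfl⟩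
  · simpa using congrArg (fun w => TensorProduct.lid ℝ V (Complex.reLm.rTensor V w)) h
  · simpa using congrArg (fun w => TensorProduct.lid ℝ V (Complex.imLm.rTensor V w)) h

theorem smul_one_tmul_add_I_tmul (μ : ℂ) (u v : V) :
    μ • ((1 : ℂ) ⊗ₜ[ℝ] u + Complex.I ⊗ₜ[ℝ] v) =
      (1 : ℂ) ⊗ₜ[ℝ] (μ.re • u - μ.im • v) + Complex.I ⊗ₜ[ℝ] (μ.im • u + μ.re • v) := by
  have hμ : μ = μ.re • (1 : ℂ) + μ.im • Complex.I := by simp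
  have hμI : μ * Complex.I = -(μ.im • (1 : ℂ)) + μ.re • Complex.I := by
    apply Complex.ext <;> simp
  rw [smul_add, TensorProduct.smul_tmul', TensorProduct.smul_tmul', smul_eq_mul, smul_eq_mul,
    mul_one, hμI]
  nth_rewrite 1 [hμ]
  simp only [TensorProduct.add_tmul, TensorProduct.neg_tmul, TensorProduct.smul_tmul,
    TensorProduct.tmul_add, TensorProduct.tmul_sub]
  abel

theorem hasEigenvalue_baseChange_complex_iff {A : V →ₗ[ℝ] V} {μ : ℂ} :
    Module.End.HasEigenvalue (A.baseChange ℂ) μ ↔ ∃ u v : V, (u ≠ 0 ∨ v ≠ 0) ∧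
      A u = μ.re • u - μ.im • v ∧ A v = μ.im • u + μ.re • v := by
  have eigen_iff (u v : V) : A.baseChange ℂ ((1 : ℂ) ⊗ₜ[ℝ] u + Complex.I ⊗ₜ[ℝ] v) =
      μ • ((1 : ℂ) ⊗ₜ[ℝ] u + Complex.I ⊗ₜ[ℝ] v) ↔
        A u = μ.re • u - μ.im • v ∧ A v = μ.im • u + μ.re • v := by
    rw [smul_one_tmul_add_I_tmul, map_add, LinearMap.baseChange_tmul, LinearMap.baseChange_tmul,
      one_tmul_add_I_tmul_inj]
  have eq_zero_iff (u v : V) : (1 : ℂ) ⊗ₜ[ℝ] u + Complex.I ⊗ₜ[ℝ] v = 0 ↔ u = 0 ∧ v = 0 := by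
    simpa using one_tmul_add_I_tmul_inj (u := u) (v := v) (u' := 0) (v' := 0)
  constructor
  · intro hμ
    obtain ⟨w, hw⟩ := hμ.exists_hasEigenvector
    obtain ⟨u, v, rfl⟩ := exists_eq_one_tmul_add_I_tmul w
    exact ⟨u, v, not_and_or.1 (mt (eq_zero_iff u v).2 hw.2), (eigen_iff u v).1 hw.apply_eq_smul⟩
  · rintro ⟨u, v, huv, hA⟩
    exact Module.End.hasEigenvalue_of_hasEigenvector
      ⟨Module.End.mem_eigenspace_iff.2 ((eigen_iff u v).2 hA),
        mt (eq_zero_iff u v).1 (not_and_or.2 huv)⟩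

theorem IsHyperbolic.conj {A : V →ₗ[ℝ] V} (hA : IsHyperbolic A) (e : V ≃ₗ[ℝ] W) :
    IsHyperbolic (e.conj A) := by
  intro μ hμ
  obtain ⟨u, v, huv, hu, hv⟩ := hasEigenvalue_baseChange_complex_iff.1 hμ
  refine hA μ (hasEigenvalue_baseChange_complex_iff.2 ⟨e.symm u, e.symm v, by simpa using huv, ?_⟩)
  rw [LinearEquiv.conj_apply_apply, ← e.eq_symm_apply] at hu hv
  exact ⟨by simpa using hu, by simpa using hv⟩

theorem exists_complex_eigenvector_mem_of_mapsTo {A : V →ₗ[ℝ] V} {S : Submodule ℝ V}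
    [FiniteDimensional ℝ S] (hS : S ≠ ⊥) (hAS : MapsTo A S S) :
    ∃ μ : ℂ, ∃ u ∈ S, ∃ v ∈ S, (u ≠ 0 ∨ v ≠ 0) ∧
      A u = μ.re • u - μ.im • v ∧ A v = μ.im • u + μ.re • v := by
  have : Nontrivial S := Submodule.nontrivial_iff_ne_bot.2 hS
  obtain ⟨μ, hμ⟩ := Module.End.exists_eigenvalue ((A.restrict hAS).baseChange ℂ)
  obtain ⟨u, v, huv, hu, hv⟩ := hasEigenvalue_baseChange_complex_iff.1 hμ
  exact ⟨μ, u, u.2, v, v.2, by simpa using huv, congrArg Subtype.val hu, congrArg Subtype.val hv⟩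

end Complexification

section LyapunovForm

section NormedSpace

variable {E F : Type*} [NormedAddCommGroup E] [NormedSpace ℝ E] [NormedAddCommGroup F]
  [NormedSpace ℝ F]

theorem HasLyapunovForm.neg {A : E →L[ℝ] E} (hA : HasLyapunovForm A) :
    HasLyapunovForm (-A) := by
  obtain ⟨b, c, hc, hb⟩ := hA
  exact ⟨-b, c, hc, fun y => by simpa using hb y⟩

theorem hasLyapunovForm_of_sphere {A : E →L[ℝ] E} (b : E →L[ℝ] E →L[ℝ] ℝ) {c : ℝ} (hc : 0 < c)
    (hb : ∀ z, ‖z‖ = 1 → c ≤ b (A z) z + b z (A z)) : HasLyapunovForm A := by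
  refine ⟨b, c, hc, fun y => ?_⟩
  rcases eq_or_ne y 0 with rfl | hy
  · simp
  obtain ⟨z, hz, hyz⟩ : ∃ z : E, ‖z‖ = 1 ∧ y = ‖y‖ • z :=
    ⟨‖y‖⁻¹ • y, by simp [norm_smul, hy], by simp [hy]⟩
  calc c * ‖y‖ ^ 2 ≤ (b (A z) z + b z (A z)) * ‖y‖ ^ 2 := by gcongr; exact hb z hz
    _ = b (A (‖y‖ • z)) (‖y‖ • z) + b (‖y‖ • z) (A (‖y‖ • z)) := by
      simp only [map_smul, smul_apply, smul_eq_mul]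
      ring
    _ = b (A y) y + b y (A y) := by rw [← hyz]

theorem HasLyapunovForm.of_continuousLinearEquiv {A : E →L[ℝ] E} (e : E ≃L[ℝ] F)
    (hA : HasLyapunovForm (e.conjContinuousAlgEquiv A)) : HasLyapunovForm A := by
  obtain ⟨b, c, hc, hb⟩ := hA
  obtain ⟨C, hC, he⟩ : ∃ C > 0, ∀ y, ‖y‖ ≤ C * ‖e y‖ := by
    refine ⟨‖(e.symm : F →L[ℝ] E)‖ + 1, by positivity, fun y => ?_⟩
    calc ‖y‖ = ‖(e.symm : F →L[ℝ] E) (e y)‖ := by simp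
      _ ≤ (‖(e.symm : F →L[ℝ] E)‖ + 1) * ‖e y‖ :=
        ContinuousLinearMap.le_of_opNorm_le _ (by linarith) _
  refine ⟨b.bilinearComp (e : E →L[ℝ] F) (e : E →L[ℝ] F), c / C ^ 2, by positivity, fun y => ?_⟩
  calc c / C ^ 2 * ‖y‖ ^ 2 ≤ c / C ^ 2 * (C * ‖e y‖) ^ 2 := by gcongr; exact he y
    _ = c * ‖e y‖ ^ 2 := by field_simp
    _ ≤ b (e (A y)) (e y) + b (e y) (e (A y)) := by
      simpa [ContinuousLinearEquiv.conjContinuousAlgEquiv_apply_apply] using hb (e y)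

end NormedSpace

section InnerProductSpace

variable {E : Type*} [NormedAddCommGroup E] [InnerProductSpace ℝ E]

theorem isPositive_apply_eq_zero_of_inner_eq_zero {P : E →L[ℝ] E} (hP : P.IsPositive) {x : E}
    (hx : inner ℝ (P x) x = 0) : P x = 0 := by
  let B : LinearMap.BilinForm ℝ E := innerₗ E ∘ₗ P.toLinearMap
  have hB : LinearMap.IsSymm B := ⟨fun x y => by
    simpa [B, real_inner_comm] using (hP.inner_left_eq_inner_right x y)⟩
  have cauchy_schwarz : inner ℝ (P x) (P x) ^ 2 ≤ inner ℝ (P x) x * inner ℝ (P (P x)) (P x) :=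
    B.apply_sq_le_of_symm hP.inner_nonneg_left hB x (P x)
  rw [hx, zero_mul] at cauchy_schwarz
  simpa using le_antisymm cauchy_schwarz (sq_nonneg _)

theorem isClosed_setOf_isPositive : IsClosed {P : E →L[ℝ] E | P.IsPositive} := by
  have hset : {P : E →L[ℝ] E | P.IsPositive} =
      (⋂ x, ⋂ y, {P | inner ℝ (P x) y = inner ℝ x (P y)}) ∩ ⋂ x, {P | 0 ≤ inner ℝ (P x) x} := by
    ext P
    simp [ContinuousLinearMap.isPositive_iff, LinearMap.IsSymmetric]
  rw [hset]
  refine (isClosed_iInter fun x => isClosed_iInter fun y => isClosed_eq ?_ ?_).inter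
    (isClosed_iInter fun x => isClosed_le ?_ ?_) <;> fun_prop

theorem convex_setOf_isPositive : Convex ℝ {P : E →L[ℝ] E | P.IsPositive} :=
  fun _ hP _ hQ _ _ hs ht _ => (hP.smul_of_nonneg hs).add (hQ.smul_of_nonneg ht)

variable (E) in
/-- The closed convex hull of the orthogonal projections onto lines, a compact base of the cone of
positive operators. -/
def densityOperators : Set (E →L[ℝ] E) :=
  closure (convexHull ℝ ((fun y => rankOne ℝ y y) '' sphere (0 : E) 1))

variable [FiniteDimensional ℝ E]

/- On the range of `P`, which `A` preserves, `A` is skew-symmetric for the inner product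
`⟪P x, P y⟫ := inner (P x) y`, so its eigenvalues there are imaginary. -/
theorem not_isHyperbolic_of_comp_add_comp_adjoint_eq_zero {A P : E →L[ℝ] E} (hP : P.IsPositive)
    (hP0 : P ≠ 0) (hAP : A ∘L P + P ∘L A.adjoint = 0) : ¬ IsHyperbolic A.toLinearMap := by
  intro hA
  have apply_P (x : E) : A (P x) = -P (A.adjoint x) :=
    eq_neg_of_add_eq_zero_left (by simpa using DFunLike.congr_fun hAP x)
  have skew (x : E) : inner ℝ (A (P x)) x = 0 := by
    have : inner ℝ (P (A.adjoint x)) x = inner ℝ (A (P x)) x := by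
      rw [hP.inner_left_eq_inner_right, ContinuousLinearMap.adjoint_inner_left, real_inner_comm]
    rw [apply_P, inner_neg_left] at this ⊢
    linarith
  have invariant : MapsTo A P.range P.range := by
    rintro _ ⟨x, rfl⟩
    exact ⟨-A.adjoint x, by simp [apply_P]⟩
  obtain ⟨μ, _, ⟨x, rfl⟩, _, ⟨y, rfl⟩, hxy, hx, hy⟩ :=
    exists_complex_eigenvector_mem_of_mapsTo
      (fun h => hP0 (ContinuousLinearMap.coe_injective (LinearMap.range_eq_bot.1 h))) invariant
  simp only [ContinuousLinearMap.coe_coe] at hxy hx hy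
  have hμ : μ.re ≠ 0 := hA μ (hasEigenvalue_baseChange_complex_iff.2 ⟨P x, P y, hxy, hx, hy⟩)
  have hsymm : inner ℝ (P y) x = inner ℝ (P x) y := by
    rw [hP.inner_left_eq_inner_right, real_inner_comm]
  have hsum : inner ℝ (P x) x + inner ℝ (P y) y = 0 := by
    have hskew : inner ℝ (A (P x)) x + inner ℝ (A (P y)) y = 0 := by rw [skew, skew, add_zero]
    rw [hx, hy] at hskew
    simp only [inner_sub_left, inner_add_left, real_inner_smul_left, hsymm] at hskew
    exact (mul_eq_zero.1 (by linarith)).resolve_left hμ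
  have hxnn := hP.inner_nonneg_left x
  have hynn := hP.inner_nonneg_left y
  exact hxy.elim
    (absurd (isPositive_apply_eq_zero_of_inner_eq_zero hP (by linarith)))
    (absurd (isPositive_apply_eq_zero_of_inner_eq_zero hP (by linarith)))

theorem isPositive_and_ne_zero_of_mem_densityOperators {P : E →L[ℝ] E}
    (hP : P ∈ densityOperators E) : P.IsPositive ∧ P ≠ 0 := by
  let tr : (E →L[ℝ] E) →ₗ[ℝ] ℝ := LinearMap.trace ℝ E ∘ₗ ContinuousLinearMap.coeLM ℝ
  have hsub : densityOperators E ⊆ {P | P.IsPositive} ∩ {P | tr P = 1} := by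
    refine closure_minimal (convexHull_min ?_ ?_) ?_
    · rintro _ ⟨y, hy, rfl⟩
      refine ⟨isPositive_rankOne_self y, ?_⟩
      calc tr (rankOne ℝ y y) = inner ℝ y y := trace_rankOne _ _
        _ = 1 := by rw [real_inner_self_eq_norm_sq, mem_sphere_zero_iff_norm.1 hy, one_pow]
    · exact convex_setOf_isPositive.inter (convex_hyperplane tr.isLinear 1)
    · exact isClosed_setOf_isPositive.inter
        (isClosed_eq tr.continuous_of_finiteDimensional continuous_const)
  refine ⟨(hsub hP).1, ?_⟩
  rintro rfl
  simpa using (hsub hP).2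

theorem isCompact_densityOperators : IsCompact (densityOperators E) := by
  have : ProperSpace (E →L[ℝ] E) := FiniteDimensional.proper ℝ _
  refine isCompact_of_isClosed_isBounded isClosed_closure
    (Bornology.IsBounded.closure (isBounded_convexHull.2 ?_))
  refine (isBounded_closedBall (x := (0 : E →L[ℝ] E)) (r := 1)).subset ?_
  rintro _ ⟨y, hy, rfl⟩
  simp [mem_sphere_zero_iff_norm.1 hy]

/- Hahn-Banach separates `0` from the image under the Lyapunov operator `P ↦ A P + P A*` of the
density operators; the separating functional applied to `y ⊗ z` is the bilinear form. -/
theorem IsHyperbolic.hasLyapunovForm_of_innerProductSpace {A : E →L[ℝ] E}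
    (hA : IsHyperbolic A.toLinearMap) : HasLyapunovForm A := by
  let lyap : (E →L[ℝ] E) →ₗ[ℝ] (E →L[ℝ] E) :=
    { toFun := fun P => A ∘L P + P ∘L A.adjoint
      map_add' := fun P Q => by ext; simp; abel
      map_smul' := fun r P => by ext; simp }
  have zero_notMem : (0 : E →L[ℝ] E) ∉ lyap '' densityOperators E := by
    rintro ⟨P, hP, hP0⟩
    obtain ⟨hpos, hne⟩ := isPositive_and_ne_zero_of_mem_densityOperators hP
    exact not_isHyperbolic_of_comp_add_comp_adjoint_eq_zero hpos hne hP0 hA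
  obtain ⟨f, c, hc, hf⟩ := geometric_hahn_banach_point_closed
    ((convex_convexHull ℝ _).closure.linear_image lyap)
    (isCompact_densityOperators.image lyap.continuous_of_finiteDimensional).isClosed
    zero_notMem
  rw [map_zero] at hc
  let b : E →ₗ[ℝ] E →ₗ[ℝ] ℝ := LinearMap.mk₂ ℝ (fun y z => f (rankOne ℝ y z))
    (by simp) (by simp) (by simp) (by simp)
  refine hasLyapunovForm_of_sphere b.toContinuousBilinearMap hc fun z hz => ?_
  have hzC : rankOne ℝ z z ∈ densityOperators E :=
    subset_closure (subset_convexHull ℝ _ ⟨z, mem_sphere_zero_iff_norm.2 hz, rfl⟩)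
  calc c ≤ f (lyap (rankOne ℝ z z)) := (hf _ (mem_image_of_mem lyap hzC)).le
    _ = b (A z) z + b z (A z) := by simp [lyap, b, comp_rankOne, rankOne_comp]

end InnerProductSpace

theorem IsHyperbolic.hasLyapunovForm {E : Type*} [NormedAddCommGroup E] [NormedSpace ℝ E]
    [FiniteDimensional ℝ E] {A : E →L[ℝ] E} (hA : IsHyperbolic A.toLinearMap) :
    HasLyapunovForm A :=
  .of_continuousLinearEquiv toEuclidean
    (IsHyperbolic.hasLyapunovForm_of_innerProductSpace (hA.conj toEuclidean.toLinearEquiv))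

end LyapunovForm

end HyperbolicLinear

section Curves

open Real

variable {E : Type*} [NormedAddCommGroup E] [NormedSpace ℝ E] {T : ℝ}

section NearlyConstantVelocity

variable {γ γ' : ℝ → E} {v : E} {C : ℝ}

theorem norm_sub_sub_smul_le_of_norm_velocity_sub_le
    (hγ : ∀ t ∈ Icc 0 T, HasDerivWithinAt γ (γ' t) (Icc 0 T) t)
    (hC : ∀ t ∈ Icc 0 T, ‖γ' t - v‖ ≤ C) {s t : ℝ} (hs : 0 ≤ s) (hst : s ≤ t) (ht : t ≤ T) :
    ‖γ t - γ s - (t - s) • v‖ ≤ C * (t - s) := by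
  have hderiv (u : ℝ) (hu : u ∈ Icc 0 T) :
      HasDerivWithinAt (fun u => γ u - u • v) (γ' u - v) (Icc 0 T) u := by
    simpa using (hγ u hu).fun_sub ((hasDerivWithinAt_id u _).smul_const v)
  have hmvt := (convex_Icc 0 T).norm_image_sub_le_of_norm_hasDerivWithin_le hderiv hC
    ⟨hs, hst.trans ht⟩ ⟨hs.trans hst, ht⟩
  rw [norm_of_nonneg (sub_nonneg.2 hst)] at hmvt
  calc ‖γ t - γ s - (t - s) • v‖ = ‖γ t - t • v - (γ s - s • v)‖ := by congr 1; module
    _ ≤ C * (t - s) := hmvt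

theorem mul_le_norm_sub_of_norm_velocity_sub_le
    (hγ : ∀ t ∈ Icc 0 T, HasDerivWithinAt γ (γ' t) (Icc 0 T) t)
    (hC : ∀ t ∈ Icc 0 T, ‖γ' t - v‖ ≤ C) {t : ℝ} (ht : t ∈ Icc 0 T) :
    (‖v‖ - C) * t ≤ ‖γ t - γ 0‖ := by
  have herr := norm_sub_sub_smul_le_of_norm_velocity_sub_le hγ hC le_rfl ht.1 ht.2
  have htri := norm_sub_norm_le (t • v) (t • v - (γ t - γ 0))
  rw [norm_smul, norm_of_nonneg ht.1, sub_sub_cancel, norm_sub_rev] at htri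
  rw [sub_zero] at herr
  linarith

theorem norm_sub_le_mul_of_norm_velocity_sub_le
    (hγ : ∀ t ∈ Icc 0 T, HasDerivWithinAt γ (γ' t) (Icc 0 T) t)
    (hC : ∀ t ∈ Icc 0 T, ‖γ' t - v‖ ≤ C) {t : ℝ} (ht : t ∈ Icc 0 T) :
    ‖γ t - γ 0‖ ≤ (‖v‖ + C) * t := by
  have herr := norm_sub_sub_smul_le_of_norm_velocity_sub_le hγ hC le_rfl ht.1 ht.2
  have htri := norm_le_norm_add_norm_sub (t • v) (γ t - γ 0)
  rw [norm_smul, norm_of_nonneg ht.1] at htri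
  rw [sub_zero] at herr
  linarith [norm_sub_rev (t • v) (γ t - γ 0)]

theorem norm_sub_le_norm_sub_of_norm_velocity_sub_le
    (hγ : ∀ t ∈ Icc 0 T, HasDerivWithinAt γ (γ' t) (Icc 0 T) t)
    (hC : ∀ t ∈ Icc 0 T, ‖γ' t - v‖ ≤ ‖v‖ / 3) {s t : ℝ} (hs : 0 ≤ s) (hst : s ≤ t)
    (ht : t ≤ T) : ‖γ s - γ 0‖ ≤ ‖γ t - γ 0‖ := by
  rcases hs.eq_or_lt with rfl | hs_pos
  · simp
  have hlower := mul_le_norm_sub_of_norm_velocity_sub_le hγ hC ⟨hs, hst.trans ht⟩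
  have herr₁ := norm_sub_sub_smul_le_of_norm_velocity_sub_le hγ hC le_rfl hs (hst.trans ht)
  have herr₂ := norm_sub_sub_smul_le_of_norm_velocity_sub_le hγ hC hs hst ht
  rw [sub_zero] at herr₁
  have homothety : t • (γ s - γ 0) = s • (γ t - γ 0) +
      ((t - s) • (γ s - γ 0 - s • v) - s • (γ t - γ s - (t - s) • v)) := by module
  refine le_of_mul_le_mul_left ?_ hs_pos
  have : t * ‖γ s - γ 0‖ ≤ s * ‖γ t - γ 0‖ + (t - s) * ‖γ s - γ 0‖ :=
    calc t * ‖γ s - γ 0‖ = ‖t • (γ s - γ 0)‖ := by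
          rw [norm_smul, norm_of_nonneg (hs.trans hst)]
      _ ≤ s * ‖γ t - γ 0‖ + ((t - s) * ‖γ s - γ 0 - s • v‖ +
          s * ‖γ t - γ s - (t - s) • v‖) := by
        rw [homothety]
        refine (norm_add_le _ _).trans (add_le_add ?_ ((norm_sub_le _ _).trans ?_)) <;>
          simp [norm_smul, abs_of_nonneg, hs, hst]
      _ ≤ s * ‖γ t - γ 0‖ + (t - s) * ((‖v‖ - ‖v‖ / 3) * s) := by
        nlinarith [mul_le_mul_of_nonneg_left herr₁ (sub_nonneg.2 hst),
          mul_le_mul_of_nonneg_left herr₂ hs]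
      _ ≤ s * ‖γ t - γ 0‖ + (t - s) * ‖γ s - γ 0‖ := by
        gcongr
  linarith

end NearlyConstantVelocity

section LyapunovGrowth

theorem mul_sub_le_sub_of_le_deriv {f f' : ℝ → ℝ} {a b C : ℝ} (hab : a ≤ b)
    (hf : ∀ t ∈ Icc a b, HasDerivWithinAt f (f' t) (Icc a b) t) (hC : ∀ t ∈ Icc a b, C ≤ f' t) :
    C * (b - a) ≤ f b - f a := by
  have hderiv (t : ℝ) (ht : t ∈ interior (Icc a b)) : HasDerivAt f (f' t) t :=
    (hf t (interior_subset ht)).hasDerivAt (mem_interior_iff_mem_nhds.1 ht)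
  exact (convex_Icc a b).mul_sub_le_image_sub_of_le_deriv
    (fun t ht => (hf t ht).continuousWithinAt)
    (fun t ht => (hderiv t ht).differentiableAt.differentiableWithinAt)
    (fun t ht => (hderiv t ht).deriv ▸ hC t (interior_subset ht))
    a (left_mem_Icc.2 hab) b (right_mem_Icc.2 hab) hab

theorem bilinear_apply_self_sub_le (b : E →L[ℝ] E →L[ℝ] ℝ) (u v : E) :
    b u u - b v v ≤ ‖b‖ * ‖u - v‖ * (‖u‖ + ‖v‖) :=
  calc b u u - b v v = b (u - v) u + b v (u - v) := by simp
    _ ≤ ‖b‖ * ‖u - v‖ * ‖u‖ + ‖b‖ * ‖v‖ * ‖u - v‖ :=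
      add_le_add ((le_norm_self _).trans (b.le_opNorm₂ _ _))
        ((le_norm_self _).trans (b.le_opNorm₂ _ _))
    _ = ‖b‖ * ‖u - v‖ * (‖u‖ + ‖v‖) := by ring

variable {b : E →L[ℝ] E →L[ℝ] ℝ} {c τ : ℝ}

theorem mul_norm_sq_le_bilinear_apply_self_sub {w w' : ℝ → E} (hc : 0 ≤ c) (hτ : 0 ≤ τ)
    (hτT : τ ≤ T) (hw : ∀ t ∈ Icc 0 T, HasDerivWithinAt w (w' t) (Icc 0 T) t)
    (hb : ∀ t ∈ Icc 0 T, c * ‖w t‖ ^ 2 ≤ b (w' t) (w t) + b (w t) (w' t))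
    (hτw : ∀ t ∈ Icc 0 τ, ‖w 0‖ ≤ 2 * ‖w t‖) :
    c * τ / 4 * ‖w 0‖ ^ 2 ≤ b (w T) (w T) - b (w 0) (w 0) := by
  have hderiv (t : ℝ) (ht : t ∈ Icc 0 T) : HasDerivWithinAt (fun t => b (w t) (w t))
      (b (w' t) (w t) + b (w t) (w' t)) (Icc 0 T) t := by
    simpa only [add_comm] using b.hasDerivWithinAt_of_bilinear (hw t ht) (hw t ht)
  have early : c * ‖w 0‖ ^ 2 / 4 * (τ - 0) ≤ b (w τ) (w τ) - b (w 0) (w 0) := by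
    have hsub : Icc 0 τ ⊆ Icc 0 T := Icc_subset_Icc_right hτT
    refine mul_sub_le_sub_of_le_deriv hτ (fun t ht => (hderiv t (hsub ht)).mono hsub)
      fun t ht => (hb t (hsub ht)).trans' ?_
    calc c * ‖w 0‖ ^ 2 / 4 ≤ c * (2 * ‖w t‖) ^ 2 / 4 := by gcongr; exact hτw t ht
      _ = c * ‖w t‖ ^ 2 := by ring
  have late : 0 * (T - τ) ≤ b (w T) (w T) - b (w τ) (w τ) := by
    have hsub : Icc τ T ⊆ Icc 0 T := Icc_subset_Icc_left hτ
    exact mul_sub_le_sub_of_le_deriv hτT (fun t ht => (hderiv t (hsub ht)).mono hsub)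
      fun t ht => (hb t (hsub ht)).trans' (by positivity)
  linarith

theorem exists_mul_norm_le_norm_sub_of_lyapunov (b : E →L[ℝ] E →L[ℝ] ℝ) (hc : 0 < c) (hτ : 0 < τ) :
    ∃ κ > 0, ∀ ⦃w w' : ℝ → E⦄ ⦃T : ℝ⦄, τ ≤ T →
      (∀ t ∈ Icc 0 T, HasDerivWithinAt w (w' t) (Icc 0 T) t) →
      (∀ t ∈ Icc 0 T, c * ‖w t‖ ^ 2 ≤ b (w' t) (w t) + b (w t) (w' t)) →
      (∀ t ∈ Icc 0 τ, ‖w 0‖ ≤ 2 * ‖w t‖) → κ * ‖w 0‖ ≤ ‖w T - w 0‖ := by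
  refine ⟨min 1 (c * τ / (12 * (‖b‖ + 1))), by positivity, fun w w' T hτT hw hb hτw => ?_⟩
  rcases le_total ‖w 0‖ ‖w T - w 0‖ with hfar | hnear
  · exact (mul_le_of_le_one_left (norm_nonneg _) (min_le_left _ _)).trans hfar
  refine (mul_le_mul_of_nonneg_right (min_le_right _ _) (norm_nonneg _)).trans ?_
  rcases (norm_nonneg (w 0)).eq_or_lt with h0 | h0
  · simp [← h0]
  have growth : c * τ / 4 * ‖w 0‖ ^ 2 ≤ 3 * (‖b‖ + 1) * ‖w T - w 0‖ * ‖w 0‖ :=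
    calc c * τ / 4 * ‖w 0‖ ^ 2 ≤ b (w T) (w T) - b (w 0) (w 0) :=
          mul_norm_sq_le_bilinear_apply_self_sub hc.le hτ.le hτT hw hb hτw
      _ ≤ ‖b‖ * ‖w T - w 0‖ * (‖w T‖ + ‖w 0‖) := bilinear_apply_self_sub_le b _ _
      _ ≤ (‖b‖ + 1) * ‖w T - w 0‖ * (3 * ‖w 0‖) := by
        gcongr
        · linarith
        · linarith [norm_le_norm_add_norm_sub (w 0) (w T), norm_sub_rev (w 0) (w T)]
      _ = 3 * (‖b‖ + 1) * ‖w T - w 0‖ * ‖w 0‖ := by ring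
  rw [div_mul_eq_mul_div, div_le_iff₀ (by positivity)]
  refine le_of_mul_le_mul_right ?_ h0
  linarith

end LyapunovGrowth

section ShortTime

variable {X : E → E} {M : Set E} {K : ℝ≥0} {γ : ℝ → E} {t τ : ℝ}

theorem norm_velocity_sub_le (hX : LipschitzOnWith K X M)
    (hγ : IsIntegralCurveOn γ (fun _ => X) (Icc 0 T)) (hγM : MapsTo γ (Icc 0 T) M)
    (ht : t ∈ Icc 0 T) : ‖X (γ t) - X (γ 0)‖ ≤ (exp (K * t) - 1) * ‖X (γ 0)‖ := by
  have lipschitz (s : ℝ) (hs : s ∈ Icc 0 T) : ‖X (γ s) - X (γ 0)‖ ≤ K * ‖γ s - γ 0‖ :=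
    hX.norm_sub_le (hγM hs) (hγM (left_mem_Icc.2 (hs.1.trans hs.2)))
  have gronwall : ‖γ t - γ 0‖ ≤ gronwallBound 0 K ‖X (γ 0)‖ (t - 0) := by
    refine norm_le_gronwallBound_of_norm_deriv_right_le (f := fun s => γ s - γ 0)
      (f' := fun s => X (γ s)) (hγ.continuousOn.sub continuousOn_const) (fun s hs => ?_)
      (by simp) (fun s hs => ?_) t ht
    · exact ((hγ s (Ico_subset_Icc_self hs)).mono_of_mem_nhdsWithin
        (Icc_mem_nhdsGE_of_mem hs)).sub_const _
    · linarith [lipschitz s (Ico_subset_Icc_self hs),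
        norm_le_norm_add_norm_sub (X (γ 0)) (X (γ s)), norm_sub_rev (X (γ 0)) (X (γ s))]
  calc ‖X (γ t) - X (γ 0)‖ ≤ K * gronwallBound 0 K ‖X (γ 0)‖ (t - 0) :=
        (lipschitz t ht).trans (by gcongr)
    _ = (exp (K * t) - 1) * ‖X (γ 0)‖ := by
      rcases eq_or_ne (K : ℝ) 0 with hK | hK
      · simp [hK]
      · rw [gronwallBound_of_K_ne_0 hK]
        field_simp
        simp

theorem norm_velocity_sub_le_div_four (hX : LipschitzOnWith K X M) (hτ : exp (K * τ) ≤ 5 / 4)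
    (hTτ : T ≤ τ) (hγ : IsIntegralCurveOn γ (fun _ => X) (Icc 0 T))
    (hγM : MapsTo γ (Icc 0 T) M) (ht : t ∈ Icc 0 T) :
    ‖X (γ t) - X (γ 0)‖ ≤ ‖X (γ 0)‖ / 4 := by
  have hexp : exp (K * t) ≤ exp (K * τ) := by
    gcongr
    exact ht.2.trans hTτ
  calc ‖X (γ t) - X (γ 0)‖ ≤ (exp (K * t) - 1) * ‖X (γ 0)‖ := norm_velocity_sub_le hX hγ hγM ht
    _ ≤ 1 / 4 * ‖X (γ 0)‖ := by gcongr; linarith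
    _ = ‖X (γ 0)‖ / 4 := by ring

theorem norm_sub_le_two_mul_norm_sub {σ : E} (hX : LipschitzOnWith K X M)
    (hτ : exp (K * τ) ≤ 5 / 4) (hσ : σ ∈ M) (hXσ : X σ = 0)
    (hγ : IsIntegralCurveOn γ (fun _ => X) (Icc 0 τ)) (hγM : MapsTo γ (Icc 0 τ) M)
    (ht : t ∈ Icc 0 τ) : ‖γ 0 - σ‖ ≤ 2 * ‖γ t - σ‖ := by
  have speed : ‖X (γ 0)‖ ≤ K * ‖γ 0 - σ‖ := by
    simpa [hXσ] using hX.norm_sub_le (hγM (left_mem_Icc.2 (ht.1.trans ht.2))) hσ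
  have hKt : K * t ≤ 1 / 4 := by
    have := mul_le_mul_of_nonneg_left ht.2 K.coe_nonneg
    linarith [add_one_le_exp (K * τ)]
  have displacement : ‖γ t - γ 0‖ ≤ ‖γ 0 - σ‖ / 2 :=
    calc ‖γ t - γ 0‖ ≤ (‖X (γ 0)‖ + ‖X (γ 0)‖ / 4) * t :=
          norm_sub_le_mul_of_norm_velocity_sub_le hγ
            (fun s hs => norm_velocity_sub_le_div_four hX hτ le_rfl hγ hγM hs) ht
      _ = 5 / 4 * ‖X (γ 0)‖ * t := by ring
      _ ≤ 5 / 4 * (K * ‖γ 0 - σ‖) * t := by gcongr; exact ht.1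
      _ = 5 / 4 * ‖γ 0 - σ‖ * (K * t) := by ring
      _ ≤ 5 / 4 * ‖γ 0 - σ‖ * (1 / 4) := by gcongr
      _ ≤ ‖γ 0 - σ‖ / 2 := by linarith [norm_nonneg (γ 0 - σ)]
  linarith [norm_sub_le_norm_sub_add_norm_sub (γ 0) (γ t) σ, norm_sub_rev (γ 0) (γ t)]

end ShortTime

section NoReturn

variable {X : E → E} {M : Set E} {K : ℝ≥0} {τ : ℝ}

/-- Every orbit segment of the vector field `X` in `M` that starts at `x`, has duration at least
`τ` and diameter less than `η` ends at distance at least `η * ‖X x‖` from `x`. -/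
def NoReturn (X : E → E) (M : Set E) (τ η : ℝ) (x : E) : Prop :=
  ∀ ⦃γ : ℝ → E⦄ ⦃T : ℝ⦄, IsIntegralCurveOn γ (fun _ => X) (Icc 0 T) → MapsTo γ (Icc 0 T) M →
    γ 0 = x → τ ≤ T → diam (γ '' Icc 0 T) < η → η * ‖X x‖ ≤ ‖γ T - x‖

theorem NoReturn.anti {η η' : ℝ} {x : E} (h : NoReturn X M τ η x) (hη : η' ≤ η) :
    NoReturn X M τ η' x := fun _ _ hγ hγM hx hT hdiam =>
  (mul_le_mul_of_nonneg_right hη (norm_nonneg _)).trans (h hγ hγM hx hT (hdiam.trans_le hη))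

theorem dist_le_diam_image_Icc {α : Type*} [PseudoMetricSpace α] {γ : ℝ → α} {a b s t : ℝ}
    (hγ : ContinuousOn γ (Icc a b)) (hs : s ∈ Icc a b) (ht : t ∈ Icc a b) :
    dist (γ s) (γ t) ≤ diam (γ '' Icc a b) :=
  dist_le_diam_of_mem (isCompact_Icc.image_of_continuousOn hγ).isBounded (mem_image_of_mem γ hs)
    (mem_image_of_mem γ ht)

theorem eventually_mul_norm_sq_le_of_hasFDerivWithinAt {A : E →L[ℝ] E} {σ : E}
    {b : E →L[ℝ] E →L[ℝ] ℝ} {c : ℝ} (hXσ : X σ = 0) (hA : HasFDerivWithinAt X A M σ) (hc : 0 < c)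
    (hb : ∀ y, c * ‖y‖ ^ 2 ≤ b (A y) y + b y (A y)) :
    ∀ᶠ y in 𝓝[M] σ, c / 2 * ‖y - σ‖ ^ 2 ≤ b (X y) (y - σ) + b (y - σ) (X y) := by
  have remainder : ∀ᶠ y in 𝓝[M] σ,
      ‖X y - A (y - σ)‖ ≤ c / (4 * (‖b‖ + 1)) * ‖y - σ‖ := by
    simpa [hXσ] using hA.isLittleO.def (by positivity : 0 < c / (4 * (‖b‖ + 1)))
  filter_upwards [remainder] with y hy
  set w := y - σ
  set r := X y - A w with hr
  have error : ‖b‖ * ‖r‖ * ‖w‖ ≤ c / 4 * ‖w‖ ^ 2 :=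
    calc ‖b‖ * ‖r‖ * ‖w‖ ≤ (‖b‖ + 1) * (c / (4 * (‖b‖ + 1)) * ‖w‖) * ‖w‖ := by
          gcongr
          linarith
      _ = c / 4 * ‖w‖ ^ 2 := by field_simp
  have left_error : -(‖b‖ * ‖r‖ * ‖w‖) ≤ b r w := (abs_le.1 (b.le_opNorm₂ r w)).1
  have right_error : -(‖b‖ * ‖w‖ * ‖r‖) ≤ b w r := (abs_le.1 (b.le_opNorm₂ w r)).1
  have split : b (X y) w + b w (X y) = (b (A w) w + b w (A w)) + (b r w + b w r) := by
    rw [hr]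
    simp only [map_sub, sub_apply]
    ring
  linarith [hb w]

theorem exists_eventually_noReturn_of_eq_zero {A : E →L[ℝ] E} {σ : E}
    (hX : LipschitzOnWith K X M) (hτ0 : 0 < τ) (hτ : exp (K * τ) ≤ 5 / 4) (hσ : σ ∈ M)
    (hXσ : X σ = 0) (hXA : HasFDerivWithinAt X A M σ) (hA : HasLyapunovForm A) :
    ∃ η > 0, ∀ᶠ x in 𝓝[M] σ, NoReturn X M τ η x := by
  obtain ⟨b, c, hc, hb⟩ := hA
  obtain ⟨r, hr, hball⟩ := mem_nhdsWithin_iff.1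
    (eventually_mul_norm_sq_le_of_hasFDerivWithinAt hXσ hXA hc hb)
  obtain ⟨κ, hκ, expansion⟩ := exists_mul_norm_le_norm_sub_of_lyapunov b (half_pos hc) hτ0
  refine ⟨min (κ / (K + 1)) (r / 2), by positivity, ?_⟩
  filter_upwards [inter_mem_nhdsWithin M (ball_mem_nhds σ (half_pos hr))]
  rintro x ⟨hxM, hxσ⟩ γ T hγ hγM rfl hT hdiam
  have stays_near (t : ℝ) (ht : t ∈ Icc 0 T) : γ t ∈ ball σ r := by
    have := dist_le_diam_image_Icc hγ.continuousOn ht (left_mem_Icc.2 (ht.1.trans ht.2))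
    rw [mem_ball] at hxσ ⊢
    linarith [dist_triangle (γ t) (γ 0) σ, min_le_right (κ / (K + 1)) (r / 2)]
  have hsub : Icc 0 τ ⊆ Icc 0 T := Icc_subset_Icc_right hT
  have far : κ * ‖γ 0 - σ‖ ≤ ‖γ T - γ 0‖ := by
    simpa using expansion hT (fun t ht => (hγ t ht).sub_const σ)
      (fun t ht => hball ⟨stays_near t ht, hγM ht⟩) fun t ht =>
        norm_sub_le_two_mul_norm_sub hX hτ hσ hXσ (hγ.mono hsub) (hγM.mono_left hsub) ht
  calc min (κ / (K + 1)) (r / 2) * ‖X (γ 0)‖ ≤ κ / (K + 1) * ((K + 1) * ‖γ 0 - σ‖) := by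
        gcongr
        · exact min_le_left _ _
        · have := hX.norm_sub_le hxM hσ
          rw [hXσ, sub_zero] at this
          linarith [norm_nonneg (γ 0 - σ)]
    _ = κ * ‖γ 0 - σ‖ := by field_simp
    _ ≤ ‖γ T - γ 0‖ := far

/- Here small orbit segments of duration at least `τ` do not exist. -/
theorem exists_eventually_noReturn_of_ne_zero {p : E} (hX : LipschitzOnWith K X M)
    (hτ0 : 0 < τ) (hτ : exp (K * τ) ≤ 5 / 4) (hp : p ∈ M) (hXp : X p ≠ 0) :
    ∃ η > 0, ∀ᶠ x in 𝓝[M] p, NoReturn X M τ η x := by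
  have speed : ∀ᶠ x in 𝓝[M] p, ‖X p‖ / 2 < ‖X x‖ :=
    (hX.continuousOn p hp).norm.eventually_const_lt (half_lt_self (norm_pos_iff.2 hXp))
  refine ⟨3 / 4 * (‖X p‖ / 2) * τ, by positivity, ?_⟩
  filter_upwards [speed]
  rintro x hx γ T hγ hγM rfl hT hdiam
  have hsub : Icc 0 τ ⊆ Icc 0 T := Icc_subset_Icc_right hT
  have hτmem : τ ∈ Icc 0 τ := right_mem_Icc.2 hτ0.le
  refine absurd hdiam (not_lt.2 ?_)
  calc 3 / 4 * (‖X p‖ / 2) * τ ≤ 3 / 4 * ‖X (γ 0)‖ * τ := by gcongr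
    _ = (‖X (γ 0)‖ - ‖X (γ 0)‖ / 4) * τ := by ring
    _ ≤ ‖γ τ - γ 0‖ := mul_le_norm_sub_of_norm_velocity_sub_le (hγ.mono hsub) (fun s hs =>
      norm_velocity_sub_le_div_four hX hτ le_rfl (hγ.mono hsub) (hγM.mono_left hsub) hs) hτmem
    _ = dist (γ τ) (γ 0) := (dist_eq_norm _ _).symm
    _ ≤ diam (γ '' Icc 0 T) := dist_le_diam_image_Icc hγ.continuousOn (hsub hτmem)
      (left_mem_Icc.2 (hτ0.le.trans hT))

theorem exists_forall_noReturn (hM : IsCompact M) (hX : LipschitzOnWith K X M) (hτ0 : 0 < τ)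
    (hτ : exp (K * τ) ≤ 5 / 4)
    (hzero : ∀ σ ∈ M, X σ = 0 → ∃ A, HasFDerivWithinAt X A M σ ∧ HasLyapunovForm A) :
    ∃ η > 0, ∀ x ∈ M, NoReturn X M τ η x := by
  refine hM.induction_on (p := fun s => ∃ η > 0, ∀ x ∈ s, NoReturn X M τ η x) ⟨1, by simp⟩ ?_ ?_ ?_
  · rintro s t hst ⟨η, hη, ht⟩
    exact ⟨η, hη, fun x hx => ht x (hst hx)⟩
  · rintro s t ⟨η, hη, hs⟩ ⟨η', hη', ht⟩
    exact ⟨min η η', lt_min hη hη', fun x hx => hx.elim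
      (fun hx => (hs x hx).anti (min_le_left _ _)) fun hx => (ht x hx).anti (min_le_right _ _)⟩
  · intro p hp
    have local_noReturn : ∃ η > 0, ∀ᶠ x in 𝓝[M] p, NoReturn X M τ η x := by
      by_cases hXp : X p = 0
      · obtain ⟨A, hXA, hA⟩ := hzero p hp hXp
        exact exists_eventually_noReturn_of_eq_zero hX hτ0 hτ hp hXp hXA hA
      · exact exists_eventually_noReturn_of_ne_zero hX hτ0 hτ hp hXp
    obtain ⟨η, hη, hev⟩ := local_noReturn
    exact ⟨{x | NoReturn X M τ η x}, hev, η, hη, fun _ hx => hx⟩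

end NoReturn

section OrbitSegments

variable {X : E → E} {M : Set E} {K : ℝ≥0}

theorem exists_image_Icc_subset_ball (hM : IsCompact M) (hX : LipschitzOnWith K X M)
    (hzero : ∀ σ ∈ M, X σ = 0 → ∃ A, HasFDerivWithinAt X A M σ ∧ HasLyapunovForm A) :
    ∃ η > 0, ∀ δ < η, ∀ ⦃γ : ℝ → E⦄ ⦃T : ℝ⦄, IsIntegralCurveOn γ (fun _ => X) (Icc 0 T) →
      MapsTo γ (Icc 0 T) M → diam (γ '' Icc 0 T) < η → dist (γ T) (γ 0) < δ * ‖X (γ 0)‖ →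
      γ '' Icc 0 T ⊆ ball (γ 0) (δ * ‖X (γ 0)‖) := by
  set τ := log (5 / 4) / (K + 1)
  have hτ0 : 0 < τ := div_pos (log_pos (by norm_num)) (by positivity)
  have hτ : exp (K * τ) ≤ 5 / 4 := by
    rw [← le_log_iff_exp_le (by norm_num)]
    calc K * τ ≤ (K + 1) * τ := by gcongr; linarith
      _ = log (5 / 4) := mul_div_cancel₀ _ (by positivity)
  obtain ⟨η, hη, noReturn⟩ := exists_forall_noReturn hM hX hτ0 hτ hzero
  refine ⟨η, hη, fun δ hδ γ T hγ hγM hdiam hclose => ?_⟩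
  rintro _ ⟨t, ht, rfl⟩
  have h0M : γ 0 ∈ M := hγM (left_mem_Icc.2 (ht.1.trans ht.2))
  rw [dist_eq_norm] at hclose
  have hTτ : T < τ := by
    by_contra! hT
    have returns_far := noReturn _ h0M hγ hγM rfl hT hdiam
    nlinarith [norm_nonneg (X (γ 0))]
  have monotone_dist : ‖γ t - γ 0‖ ≤ ‖γ T - γ 0‖ :=
    norm_sub_le_norm_sub_of_norm_velocity_sub_le hγ (fun s hs =>
      (norm_velocity_sub_le_div_four hX hτ hTτ.le hγ hγM hs).trans (by gcongr; norm_num))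
      ht.1 ht.2 le_rfl
  rw [mem_ball, dist_eq_norm]
  exact monotone_dist.trans_lt hclose

theorem exists_image_uIcc_subset_ball (hM : IsCompact M) (hX : LipschitzOnWith K X M)
    (hzero : ∀ σ ∈ M, X σ = 0 → ∃ A, HasFDerivWithinAt X A M σ ∧ HasLyapunovForm A) :
    ∃ η > 0, ∀ δ < η, ∀ ⦃γ : ℝ → E⦄, IsIntegralCurve γ (fun _ => X) → (∀ t, γ t ∈ M) → ∀ t s,
      diam (γ '' uIcc t s) < η → dist (γ t) (γ s) < δ * ‖X (γ t)‖ →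
      γ '' uIcc t s ⊆ ball (γ t) (δ * ‖X (γ t)‖) := by
  have hzero_neg : ∀ σ ∈ M, (-X) σ = 0 →
      ∃ A, HasFDerivWithinAt (-X) A M σ ∧ HasLyapunovForm A := fun σ hσ hXσ =>
    let ⟨A, hXA, hA⟩ := hzero σ hσ (neg_eq_zero.1 hXσ)
    ⟨-A, hXA.neg, hA.neg⟩
  obtain ⟨η₁, hη₁, forward⟩ := exists_image_Icc_subset_ball hM hX hzero
  obtain ⟨η₂, hη₂, backward⟩ := exists_image_Icc_subset_ball hM hX.neg hzero_neg
  refine ⟨min η₁ η₂, lt_min hη₁ hη₂, fun δ hδ γ hγ hγM t s hdiam hclose => ?_⟩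
  rw [dist_comm] at hclose
  rcases le_total t s with hts | hst
  · have himage : γ '' uIcc t s = (fun u => γ (t + u)) '' Icc 0 (s - t) := by
      rw [← image_image γ (fun u => t + u), image_const_add_Icc, uIcc_of_le hts, add_zero,
        add_sub_cancel]
    rw [himage] at hdiam ⊢
    simpa using forward δ (hδ.trans_le (min_le_left _ _))
      (fun u _ => ((hγ (t + u)).comp_const_add t u).hasDerivWithinAt) (fun u _ => hγM _)
      (hdiam.trans_le (min_le_left _ _)) (by simpa using hclose)
  · have himage : γ '' uIcc t s = (fun u => γ (t - u)) '' Icc 0 (t - s) := by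
      rw [← image_image γ (fun u => t - u), image_const_sub_Icc, uIcc_of_ge hst, sub_zero,
        sub_sub_cancel]
    rw [himage] at hdiam ⊢
    simpa using backward δ (hδ.trans_le (min_le_right _ _))
      (fun u _ => ((hγ (t - u)).comp_const_sub t u).hasDerivWithinAt) (fun u _ => hγM _)
      (hdiam.trans_le (min_le_right _ _)) (by simpa using hclose)

end OrbitSegments

end Curves

section Flow

variable {E : Type*} [NormedAddCommGroup E] [NormedSpace ℝ E] {φ : ℝ → E → E} {X : E → E}
  {M : Set E} {K : ℝ≥0}

theorem mem_fixOn_of_velocity_eq_zero (hflow : FlowOn φ M) (hX : LipschitzOnWith K X M)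
    (hvel : ∀ x ∈ M, IsIntegralCurve (fun t => φ t x) (fun _ => X)) {σ : E} (hσ : σ ∈ M)
    (hXσ : X σ = 0) : σ ∈ fixOn φ M := by
  obtain ⟨-, hmaps, hzero, -⟩ := hflow
  have constant_solution : (fun t => φ t σ) = fun _ => σ :=
    ODE_solution_unique_univ (v := fun _ => X) (s := fun _ => M) (t₀ := 0) (fun _ => hX)
      (fun t => ⟨hvel σ hσ t, hmaps t hσ⟩)
      (fun t => ⟨by simpa [hXσ] using hasDerivAt_const t σ, hσ⟩) (hzero σ hσ)
  exact ⟨hσ, congrFun constant_solution⟩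

/- Derivatives of `X` within `M` are determined only on vectors tangent to `M`: on a submanifold,
`A` may extend `d_σX : T_σM → T_σM` by the identity of a complement, so that `A` is hyperbolic as
soon as `d_σX` is. -/
theorem efficient_of_hyperbolic_fixed_general [FiniteDimensional ℝ E] (hM : IsCompact M)
    (hflow : FlowOn φ M) (hX : LipschitzOnWith K X M)
    (hvel : ∀ x ∈ M, ∀ t : ℝ, HasDerivAt (fun s : ℝ => φ s x) (X (φ t x)) t)
    (hhyp : ∀ σ ∈ fixOn φ M, ∃ A : E →L[ℝ] E,
      HasFDerivWithinAt X A M σ ∧ IsHyperbolic A.toLinearMap) :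
    ∃ δs > 0, ∀ δ < δs, ∀ x ∈ M, ∀ t s : ℝ, dist (φ t x) (φ s x) < δ * ‖X (φ t x)‖ →
      diam (arc φ x t s) < δs → arc φ x t s ⊆ ball (φ t x) (δ * ‖X (φ t x)‖) := by
  have lyapunov : ∀ σ ∈ M, X σ = 0 → ∃ A, HasFDerivWithinAt X A M σ ∧ HasLyapunovForm A :=
    fun σ hσ hXσ =>
      let ⟨A, hXA, hA⟩ := hhyp σ (mem_fixOn_of_velocity_eq_zero hflow hX hvel hσ hXσ)
      ⟨A, hXA, hA.hasLyapunovForm⟩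
  obtain ⟨δs, hδs, orbit_segments⟩ := exists_image_uIcc_subset_ball hM hX lyapunov
  exact ⟨δs, hδs, fun δ hδ x hx t s hclose hdiam =>
    orbit_segments δ hδ (hvel x hx) (fun u => hflow.2.1 u hx) t s hdiam hclose⟩

end Flow

/-- Let `φ` be a flow on a compact C² manifold `M ⊂ ℝ^d` with C¹
velocity field `X`. If every fixed point of `φ` is hyperbolic, then `φ` is
efficient. -/
theorem efficient_of_hyperbolic_fixed {d : ℕ}
    (φ : ℝ → Euc d → Euc d) (X : Euc d → Euc d) (M : Set (Euc d))
    (hMc : IsCompact M) (hflow : FlowOn φ M) (hX : ContDiff ℝ 1 X)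
    (hvel : ∀ x ∈ M, ∀ t : ℝ, HasDerivAt (fun s : ℝ => φ s x) (X (φ t x)) t)
    (hhyp : ∀ σ ∈ fixOn φ M, HyperbolicFixed X σ) :
    Efficient φ X M := by
  obtain ⟨K, hK⟩ := hX.locallyLipschitz.locallyLipschitzOn.exists_lipschitzOnWith_of_compact hMc
  obtain ⟨δs, hδs, segments⟩ := efficient_of_hyperbolic_fixed_general hMc hflow hK hvel fun σ hσ =>
    ⟨fderiv ℝ X σ, (hX.differentiable one_ne_zero σ).hasFDerivAt.hasFDerivWithinAt, hhyp σ hσ⟩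
  exact ⟨δs, hδs, fun δ _ hδ x hx _ g _ hdist hdiam t => segments δ hδ x hx t (g t) (hdist t)
    (hdiam t)⟩
end
end

section
/- For a flow φ on a compact metric space (Λ, dist) the following statements are equivalent: (i) fix(φ) is an open subset of Λ; (ii) there is T₀ > 0 such that for all T ∈ (0, T₀] there is ξ > 0 such that dist(φ_T(x), x) > ξ for all x ∉ fix(φ). -/
open Metric Set Function

noncomputable section

/-!
If `T` is a period of `x`, then every point of the orbit of `x` is `φ r x` for some `r ∈ [0, T)`.
So if points near a non-fixed `y` had arbitrarily small periods, their whole orbits would stay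
near `y`, whereas continuity forces `φ t x` to stay away from `y` for a suitable fixed `t`. When
`fix(φ)` is open and its complement is compact, some interval `(0, T₀]` therefore contains no
period of any point of the complement, on which each displacement `x ↦ dist (φ T x) x` with
`T ∈ (0, T₀]` then has a positive minimum. Conversely, if one displacement is bounded below off
`fix(φ)`, then `fix(φ)` is the open set where that displacement is below the bound.
-/

section

open Filter Topology

variable {α : Type*} {φ : ℝ → α → α}

namespace IsFlow

variable [TopologicalSpace α]

theorem continuous_apply_s10 (hφ : IsFlow φ) (T : ℝ) : Continuous (φ T) :=
  hφ.1.comp (Continuous.prodMk_right T)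

theorem periodic_of_apply_eq (hφ : IsFlow φ) {T : ℝ} {x : α} (hT : φ T x = x) :
    Periodic (fun t => φ t x) T := fun t => by
  simp only [hφ.2.2, hT]

theorem eventually_forall_mem_Ico_apply_ne [T2Space α] (hφ : IsFlow φ) {t : ℝ} {y : α}
    (hy : φ t y ≠ y) :
    ∀ᶠ p : ℝ × α in 𝓝[>] 0 ×ˢ 𝓝 y, ∀ r ∈ Ico 0 p.1, φ t p.2 ≠ φ r p.2 := by
  have hne : ∀ᶠ p : ℝ × α in 𝓝 0 ×ˢ 𝓝 y, φ t p.2 ≠ φ p.1 p.2 := by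
    rw [← nhds_prod_eq]
    refine (isOpen_ne_fun ((hφ.continuous_apply_s10 t).comp continuous_snd) hφ.1).mem_nhds ?_
    simpa only [mem_ofPred_eq, comp_apply, hφ.2.1] using hy
  obtain ⟨P, hP, Q, hQ, hPQ⟩ := eventually_prod_iff.1 hne
  obtain ⟨ε, hε, hεP⟩ := mem_nhdsGE_iff_exists_Ico_subset.1 (mem_nhdsWithin_of_mem_nhds hP)
  filter_upwards [prod_mem_prod (Ioo_mem_nhdsGT hε) hQ] with p hp r hr
  exact hPQ (hεP ⟨hr.1, hr.2.trans hp.1.2⟩) hp.2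

theorem eventually_apply_ne_of_notMem_fixSet [T2Space α] (hφ : IsFlow φ) {y : α}
    (hy : y ∉ fixSet φ) : ∀ᶠ p : ℝ × α in 𝓝[>] 0 ×ˢ 𝓝 y, φ p.1 p.2 ≠ p.2 := by
  obtain ⟨t, ht⟩ : ∃ t, φ t y ≠ y := not_forall.1 hy
  have hpos : ∀ᶠ p : ℝ × α in 𝓝[>] 0 ×ˢ 𝓝 y, 0 < p.1 :=
    tendsto_fst.eventually self_mem_nhdsWithin
  filter_upwards [hφ.eventually_forall_mem_Ico_apply_ne ht, hpos] with p hne hp hper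
  obtain ⟨r, hr, htr⟩ := (hφ.periodic_of_apply_eq hper).exists_mem_Ico₀ hp t
  exact hne r hr htr

theorem eventually_forall_mem_apply_ne [T2Space α] (hφ : IsFlow φ) {K : Set α}
    (hK : IsCompact K) (hfix : Disjoint K (fixSet φ)) :
    ∀ᶠ T in 𝓝[>] (0 : ℝ), ∀ x ∈ K, φ T x ≠ x := by
  have hne : ∀ᶠ p : ℝ × α in 𝓝[>] 0 ×ˢ 𝓝ˢ K, φ p.1 p.2 ≠ p.2 :=
    hK.mem_prod_nhdsSet_of_forall fun y hy =>
      hφ.eventually_apply_ne_of_notMem_fixSet (hfix.notMem_of_mem_left hy)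
  exact hne.curry.mono fun _ h => h.self_of_nhdsSet

end IsFlow

theorem exists_pos_forall_lt_dist {X Y : Type*} [TopologicalSpace X] [MetricSpace Y]
    {f g : X → Y} {K : Set X} (hK : IsCompact K) (hf : ContinuousOn f K) (hg : ContinuousOn g K)
    (hne : ∀ x ∈ K, f x ≠ g x) :
    ∃ ξ > 0, ∀ x ∈ K, ξ < dist (f x) (g x) := by
  obtain ⟨δ, hδ, hle⟩ := hK.exists_forall_le' (continuous_dist.comp_continuousOn (hf.prodMk hg))
    fun x hx => dist_pos.2 (hne x hx)
  exact ⟨δ / 2, half_pos hδ, fun x hx => (half_lt_self hδ).trans_le (hle x hx)⟩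

theorem isOpen_fixSet_of_forall_le_dist [PseudoMetricSpace α] {T ξ : ℝ}
    (hcont : Continuous (φ T)) (hξ : 0 < ξ) (hle : ∀ x ∉ fixSet φ, ξ ≤ dist (φ T x) x) :
    IsOpen (fixSet φ) := by
  have heq : fixSet φ = {x | dist (φ T x) x < ξ} := by
    ext x
    refine ⟨fun hx => ?_, fun hx => not_imp_comm.1 (hle x) (not_le.2 hx)⟩
    rwa [mem_ofPred_eq, hx T, dist_self]
  rw [heq]
  exact isOpen_lt (hcont.dist continuous_id) continuous_const

theorem isOpen_fixSet_iff_uniform_displacement_general [MetricSpace α] (hφ : IsFlow φ)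
    (hK : IsCompact (closure (fixSet φ)ᶜ)) :
    IsOpen (fixSet φ) ↔
      ∃ T₀ > (0 : ℝ), ∀ T ∈ Ioc 0 T₀, ∃ ξ > 0, ∀ x ∉ fixSet φ, ξ < dist (φ T x) x := by
  constructor
  · intro hopen
    rw [hopen.isClosed_compl.closure_eq] at hK
    obtain ⟨T₀, hT₀, hne⟩ := mem_nhdsGT_iff_exists_Ioc_subset.1
      (hφ.eventually_forall_mem_apply_ne hK disjoint_compl_left)
    exact ⟨T₀, hT₀, fun T hT =>
      exists_pos_forall_lt_dist hK (hφ.continuous_apply_s10 T).continuousOn continuousOn_id (hne hT)⟩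
  · rintro ⟨T₀, hT₀, hdisp⟩
    obtain ⟨ξ, hξ, hlt⟩ := hdisp T₀ (right_mem_Ioc.2 hT₀)
    exact isOpen_fixSet_of_forall_le_dist (hφ.continuous_apply_s10 T₀) hξ fun x hx => (hlt x hx).le

end

/-- For a flow `φ` on a compact metric space `(Λ, dist)` the
following are equivalent: (i) `fix(φ)` is open; (ii) there is `T₀ > 0` such that
for all `T ∈ (0, T₀]` there is `ξ > 0` with `dist (φ_T x) x > ξ` for all
`x ∉ fix(φ)`. -/
theorem isOpen_fixSet_iff_uniform_displacement
    {Λ : Type*} [MetricSpace Λ] [CompactSpace Λ]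
    (φ : ℝ → Λ → Λ) (hφ : IsFlow φ) :
    IsOpen (fixSet φ) ↔
      ∃ T₀ > (0 : ℝ), ∀ T : ℝ, T ∈ Set.Ioc 0 T₀ →
        ∃ ξ > (0 : ℝ), ∀ x : Λ, x ∉ fixSet φ → ξ < dist (φ T x) x :=
  isOpen_fixSet_iff_uniform_displacement_general hφ isClosed_closure.isCompact
end
end

section
/- Let φ be a flow on a compact metric space (Λ, dist). If every fixed point of φ is dynamically isolated, then there is β₀ > 0 such that every point x ∈ Λ whose orbit satisfies diam(φ_ℝ(x)) < β₀ is a fixed point of φ. -/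
open Metric Set Function

noncomputable section

/-- A fixed point `σ` of the flow `φ` on `M` is dynamically isolated: there is
`r > 0` such that the only point of `M` whose whole orbit stays in `B(σ, r)` is
`σ` itself. -/
def DynIsolated {α : Type*} [MetricSpace α] (φ : ℝ → α → α) (M : Set α) (σ : α) : Prop :=
  ∃ r > (0 : ℝ), ∀ x ∈ M, orb φ x ⊆ Metric.ball σ r → x = σ

/-!
In the limit of small orbit diameter only fixed points survive. Near a point moved by some `φ t`,
continuity of the displacement `x ↦ dist (φ t x) x` bounds the diameters of orbits away from zero.
Near a dynamically isolated fixed point `σ`, an orbit of small diameter cannot leave the isolating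
ball, so it is `{σ}`. Compactness makes these local thresholds uniform.
-/

open Filter Topology Bornology

theorem exists_gt_forall_lt_imp_of_isCompact {X R : Type*} [TopologicalSpace X] [LinearOrder R]
    [NoMaxOrder R] {K : Set X} (hK : IsCompact K) {f : X → R} {p : X → Prop} (c : R)
    (h : ∀ y ∈ K, ∃ b > c, ∀ᶠ x in 𝓝[K] y, f x < b → p x) :
    ∃ b > c, ∀ x ∈ K, f x < b → p x := by
  refine hK.induction_on (p := fun s ↦ ∃ b > c, ∀ x ∈ s, f x < b → p x) ?empty ?mono ?union ?nhds
  case empty => exact (exists_gt c).imp fun b hb ↦ ⟨hb, by simp⟩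
  case mono =>
    rintro s t hst ⟨b, hb, ht⟩
    exact ⟨b, hb, fun x hx ↦ ht x (hst hx)⟩
  case union =>
    rintro s t ⟨b, hb, hs⟩ ⟨b', hb', ht⟩
    refine ⟨min b b', lt_min hb hb', fun x hx hfx ↦ ?_⟩
    exact hx.elim (hs x · (lt_min_iff.1 hfx).1) (ht x · (lt_min_iff.1 hfx).2)
  case nhds =>
    intro y hy
    obtain ⟨b, hb, hev⟩ := h y hy
    exact ⟨{x | f x < b → p x}, hev, b, hb, fun x hx ↦ hx⟩

section Orbit

variable {α : Type*} {φ : ℝ → α → α} {x y : α}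

theorem dist_le_diam_orb [PseudoMetricSpace α] (h0 : φ 0 x = x) (hb : IsBounded (orb φ x))
    (t : ℝ) : dist (φ t x) x ≤ diam (orb φ x) :=
  dist_le_diam_of_mem hb ⟨t, rfl⟩ ⟨0, h0⟩

theorem orb_subset_ball [PseudoMetricSpace α] {r : ℝ} (h0 : φ 0 x = x)
    (hb : IsBounded (orb φ x)) (hr : diam (orb φ x) + dist x y < r) : orb φ x ⊆ ball y r := by
  rintro _ ⟨t, rfl⟩
  calc dist (φ t x) y ≤ dist (φ t x) x + dist x y := dist_triangle _ _ _
    _ ≤ diam (orb φ x) + dist x y := by gcongr; exact dist_le_diam_orb h0 hb t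
    _ < r := hr

variable [MetricSpace α] {K : Set α}

theorem eventually_lt_diam_orb_of_notMem_fixSet (hcont : ∀ t, ContinuousWithinAt (φ t) K y)
    (h0 : ∀ x ∈ K, φ 0 x = x) (hb : ∀ x ∈ K, IsBounded (orb φ x)) (hy : y ∉ fixSet φ) :
    ∃ β > (0 : ℝ), ∀ᶠ x in 𝓝[K] y, β < diam (orb φ x) := by
  obtain ⟨t, ht⟩ : ∃ t, φ t y ≠ y := not_forall.1 hy
  have hpos : 0 < dist (φ t y) y := dist_pos.2 ht
  have hdisp : Tendsto (fun x ↦ dist (φ t x) x) (𝓝[K] y) (𝓝 (dist (φ t y) y)) :=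
    (hcont t).dist continuousWithinAt_id
  refine ⟨dist (φ t y) y / 2, half_pos hpos, ?_⟩
  filter_upwards [hdisp.eventually_const_lt (half_lt_self hpos), self_mem_nhdsWithin] with x hx hxK
  exact hx.trans_le (dist_le_diam_orb (h0 x hxK) (hb x hxK) t)

theorem DynIsolated.eventually_eq_of_diam_orb_lt {σ : α} (hσ : DynIsolated φ K σ)
    (h0 : ∀ x ∈ K, φ 0 x = x) (hb : ∀ x ∈ K, IsBounded (orb φ x)) :
    ∃ β > (0 : ℝ), ∀ᶠ x in 𝓝[K] σ, diam (orb φ x) < β → x = σ := by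
  obtain ⟨r, hr, hiso⟩ := hσ
  refine ⟨r / 2, half_pos hr, ?_⟩
  filter_upwards [mem_nhdsWithin_of_mem_nhds (ball_mem_nhds σ (half_pos hr)),
    self_mem_nhdsWithin] with x hx hxK hdiam
  have hsum : diam (orb φ x) + dist x σ < r := by linarith [mem_ball.1 hx]
  exact hiso x hxK (orb_subset_ball (h0 x hxK) (hb x hxK) hsum)

theorem exists_diam_bound_of_dynIsolated_fixed_general (hK : IsCompact K)
    (hcont : ∀ t, ContinuousOn (φ t) K) (h0 : ∀ x ∈ K, φ 0 x = x)
    (hb : ∀ x ∈ K, IsBounded (orb φ x)) (hiso : ∀ σ ∈ K ∩ fixSet φ, DynIsolated φ K σ) :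
    ∃ β₀ > (0 : ℝ), ∀ x ∈ K, diam (orb φ x) < β₀ → x ∈ fixSet φ := by
  refine exists_gt_forall_lt_imp_of_isCompact hK 0 fun y hyK ↦ ?_
  by_cases hy : y ∈ fixSet φ
  · obtain ⟨β, hβ, hev⟩ := (hiso y ⟨hyK, hy⟩).eventually_eq_of_diam_orb_lt h0 hb
    exact ⟨β, hβ, hev.mono fun x hx hdiam ↦ hx hdiam ▸ hy⟩
  · obtain ⟨β, hβ, hev⟩ :=
      eventually_lt_diam_orb_of_notMem_fixSet (fun t ↦ hcont t y hyK) h0 hb hy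
    exact ⟨β, hβ, hev.mono fun x hx hdiam ↦ absurd hdiam hx.not_gt⟩

end Orbit

theorem IsFlow.continuous_apply_s11 {α : Type*} [TopologicalSpace α] {φ : ℝ → α → α} (hφ : IsFlow φ)
    (t : ℝ) : Continuous (φ t) :=
  hφ.1.comp (Continuous.prodMk_right t)

/-- Let `φ` be a flow on a compact metric space `(Λ, dist)`. If
every fixed point of `φ` is dynamically isolated, then there is `β₀ > 0` such that
every point whose orbit has diameter `< β₀` is a fixed point. -/
theorem exists_diam_bound_of_dynIsolated_fixed
    {Λ : Type*} [MetricSpace Λ] [CompactSpace Λ]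
    (φ : ℝ → Λ → Λ) (hφ : IsFlow φ)
    (hiso : ∀ σ ∈ fixSet φ, DynIsolated φ Set.univ σ) :
    ∃ β₀ > (0 : ℝ), ∀ x : Λ, Metric.diam (orb φ x) < β₀ → x ∈ fixSet φ := by
  simpa using exists_diam_bound_of_dynIsolated_fixed_general isCompact_univ
    (fun t ↦ (hφ.continuous_apply_s11 t).continuousOn) (fun x _ ↦ hφ.2.1 x)
    (fun _ _ ↦ isBounded_of_compactSpace) (fun σ hσ ↦ hiso σ hσ.2)
end
end
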